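/- arXiv:2407.05095 — 2 statements merged into one kernel-verified Lean document; each statement's English description precedes it below -/
import Mathlib

section
/- Let Θ : C∖{o} → (0,∞) be continuous and homogeneous of degree −q with n−1 < q < n. A Borel measure φ on Ω_{C°} is the Θ-weighted cone-volume measure V_K^Θ of some C-pseudo-cone K if and only if φ is finite. -/
open MeasureTheory Set Filter
open scoped RealInnerProductSpace ENNReal Topology Pointwise NNReal

noncomputable section

abbrev En (n : ℕ) := EuclideanSpace ℝ (Fin n)

/-- `C` is a pointed closed convex cone with nonempty interior. -/
def IsGoodCone (n : ℕ) (C : Set (En n)) : Prop :=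
  IsClosed C ∧ Convex ℝ C ∧ (∀ x ∈ C, ∀ r : ℝ, 0 ≤ r → r • x ∈ C) ∧
    C ∩ (-C) = {0} ∧ (interior C).Nonempty

/-- The dual cone `C° = {x : ⟨x,y⟩ ≤ 0 ∀ y ∈ C}`. -/
def dualCone (n : ℕ) (C : Set (En n)) : Set (En n) := {x | ∀ y ∈ C, ⟪x, y⟫ ≤ 0}

/-- `Ω_C = S^{n-1} ∩ int C`. -/
def omegaC (n : ℕ) (C : Set (En n)) : Set (En n) := Metric.sphere 0 1 ∩ interior C

/-- `Ω_{C°} = S^{n-1} ∩ int C°`. -/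
def omegaDual (n : ℕ) (C : Set (En n)) : Set (En n) :=
  Metric.sphere 0 1 ∩ interior (dualCone n C)

/-- A pseudo-cone: nonempty closed convex set not containing `0` with `λK ⊆ K` for `λ ≥ 1`. -/
def IsPseudoCone (n : ℕ) (K : Set (En n)) : Prop :=
  K.Nonempty ∧ IsClosed K ∧ Convex ℝ K ∧ (0 : En n) ∉ K ∧ ∀ l : ℝ, 1 ≤ l → l • K ⊆ K

/-- The recession cone of `K`. -/
def recCone (n : ℕ) (K : Set (En n)) : Set (En n) :=
  {z | ∀ x ∈ K, ∀ t : ℝ, 0 ≤ t → x + t • z ∈ K}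

/-- A `C`-pseudo-cone: a pseudo-cone with recession cone `C`. -/
def IsCPseudoCone (n : ℕ) (C K : Set (En n)) : Prop := IsPseudoCone n K ∧ recCone n K = C

/-- The set of outer unit normal vectors of `K` at `x`. -/
def normalsAt (n : ℕ) (K : Set (En n)) (x : En n) : Set (En n) :=
  {u | ‖u‖ = 1 ∧ ∀ y ∈ K, ⟪y, u⟫ ≤ ⟪x, u⟫}

/-- `ν_K^{-1}(ω)`: the boundary points of `K` whose outer unit normal is unique and lies in `ω`. -/
def nuInv (n : ℕ) (K ω : Set (En n)) : Set (En n) :=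
  {x | x ∈ frontier K ∧ ∃ u ∈ ω, normalsAt n K x = {u}}

open Classical in
/-- The outer unit normal map `ν_K` (junk value `0` where the normal is not unique). -/
def nuMap (n : ℕ) (K : Set (En n)) (x : En n) : En n :=
  if h : ∃ u, normalsAt n K x = {u} then h.choose else 0

/-- `Δ(ω)`: the spherical (angular) distance of `ω` from the boundary of `Ω_{C°}`
(the relative boundary of `Ω_{C°}` in the unit sphere is `closure Ω_{C°} \ Ω_{C°}`,
since `Ω_{C°}` is relatively open in the sphere). -/
def sphereAngleDist (n : ℕ) (C ω : Set (En n)) : ℝ :=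
  sInf {d | ∃ u ∈ ω, ∃ v ∈ closure (omegaDual n C) \ omegaDual n C,
    d = InnerProductGeometry.angle u v}

/-- `b(K)`: the distance of `K` from the origin. -/
def distOrigin (n : ℕ) (K : Set (En n)) : ℝ := Metric.infDist 0 K

/-- `C^-(t) = C ∩ H^-(𝔳, t)`. -/
def Cminus (n : ℕ) (C : Set (En n)) (v : En n) (t : ℝ) : Set (En n) :=
  C ∩ {x | ⟪x, v⟫ ≤ t}

/-- The support function `h_K(u) = sup{⟨y,u⟩ : y ∈ K}`. -/
def suppFn (n : ℕ) (K : Set (En n)) (u : En n) : ℝ := sSup ((fun y => ⟪y, u⟫) '' K)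

/-- `Θ : C∖{0} → (0,∞)` continuous and homogeneous of degree `-q`. -/
def IsThetaWeight (n : ℕ) (C : Set (En n)) (q : ℝ) (Θ : En n → ℝ) : Prop :=
  ContinuousOn Θ (C \ {0}) ∧ (∀ y ∈ C \ {0}, 0 < Θ y) ∧
    ∀ y ∈ C \ {0}, ∀ r : ℝ, 0 < r → Θ (r • y) = r ^ (-q) * Θ y

/-- The `Θ`-weighted `n`-dimensional Hausdorff (Lebesgue) measure `H_Θ^n`. -/
def HTheta (n : ℕ) (Θ : En n → ℝ) : Measure (En n) :=
  volume.withDensity fun y => ENNReal.ofReal (Θ y)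

/-- The `Θ`-weighted cone-volume measure `V_K^Θ(ω) = H_Θ^n(⋃_{x ∈ ν_K^{-1}(ω)} [0,x])`. -/
def coneVol (n : ℕ) (Θ : En n → ℝ) (K ω : Set (En n)) : ℝ≥0∞ :=
  HTheta n Θ (⋃ x ∈ nuInv n K ω, segment ℝ (0 : En n) x)

/-- The (unweighted) cone-volume measure `V_K(ω) = H^n(⋃_{x ∈ ν_K^{-1}(ω)} [0,x])`. -/
def coneVolU (n : ℕ) (K ω : Set (En n)) : ℝ≥0∞ :=
  volume (⋃ x ∈ nuInv n K ω, segment ℝ (0 : En n) x)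

/-- The `Θ`-weighted surface area measure `S_{n-1}^Θ(K,ω) = ∫_{ν_K^{-1}(ω)} Θ dH^{n-1}`. -/
def surfTheta (n : ℕ) (Θ : En n → ℝ) (K ω : Set (En n)) : ℝ≥0∞ :=
  ∫⁻ x in nuInv n K ω, ENNReal.ofReal (Θ x) ∂(μH[(n : ℝ) - 1])

/-- `K ∈ K(C,ϖ)`: `K` is a `C`-pseudo-cone that is `C`-determined by `ϖ`. -/
def CDetermined (n : ℕ) (C ϖ K : Set (En n)) : Prop :=
  IsCPseudoCone n C K ∧ K = C ∩ ⋂ u ∈ ϖ, {x | ⟪x, u⟫ ≤ suppFn n K u}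

/-- The Wulff shape `[g] = C ∩ ⋂_{u ∈ ϖ} {y : ⟨y,u⟩ ≤ -g(u)}`. -/
def wulff (n : ℕ) (C ϖ : Set (En n)) (g : En n → ℝ) : Set (En n) :=
  C ∩ ⋂ u ∈ ϖ, {y | ⟪y, u⟫ ≤ -g u}

/-- The `Θ`-weighted covolume `V_Θ(K) = ∫_{C∖K} Θ dH^n`. -/
def covol (n : ℕ) (Θ : En n → ℝ) (C K : Set (En n)) : ℝ≥0∞ := HTheta n Θ (C \ K)

/-- The radial function `ρ_K(v) = min{λ : λv ∈ K}`. -/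
def rho (n : ℕ) (K : Set (En n)) (v : En n) : ℝ := sInf {t : ℝ | t • v ∈ K}

/-- The radial map `r_K(v) = ρ_K(v) v`. -/
def radMap (n : ℕ) (K : Set (En n)) (v : En n) : En n := rho n K v • v

/-- `α_K^{-1}(ω)`: directions `v ∈ Ω_C` with `r_K(v) ∈ ∂'K` (boundary point in `int C` with
unique outer normal) whose unique outer normal lies in `ω`. -/
def alphaInv (n : ℕ) (C K ω : Set (En n)) : Set (En n) :=
  {v ∈ omegaC n C | radMap n K v ∈ frontier K ∧ radMap n K v ∈ interior C ∧
    ∃ u ∈ ω, normalsAt n K (radMap n K v) = {u}}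

/-- `μ` is the Borel measure on `Ω_{C°}` representing the `Θ`-weighted cone-volume
measure of `K` (extended by `0` outside `Ω_{C°}`). -/
def RepsConeVol (n : ℕ) (C : Set (En n)) (Θ : En n → ℝ) (K : Set (En n))
    (μ : Measure (En n)) : Prop :=
  μ (omegaDual n C)ᶜ = 0 ∧
    ∀ ω, MeasurableSet ω → ω ⊆ omegaDual n C → μ ω = coneVol n Θ K ω

/-- `μ` is the Borel measure on `Ω_{C°}` representing the `Θ`-weighted surface area
measure of `K` (extended by `0` outside `Ω_{C°}`). -/
def RepsSurf (n : ℕ) (C : Set (En n)) (Θ : En n → ℝ) (K : Set (En n))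
    (μ : Measure (En n)) : Prop :=
  μ (omegaDual n C)ᶜ = 0 ∧
    ∀ ω, MeasurableSet ω → ω ⊆ omegaDual n C → μ ω = surfTheta n Θ K ω

/-!
A cone-volume measure is finite: for `z ∈ K ∩ int C`, the segments from `o` to the boundary points
of `K` with a normal in `Ω_{C°}` miss `z + C` up to a null set, and `C ∖ (z + C)` has finite weight
because `q > n - 1`.

Conversely, let `φ ≠ 0` be finite. Among the nonempty `K ⊆ C` whose weighted covolume is at most
`φ(Ω_{C°})`, one maximises `∫ log (-h_K) dφ`; it exists by Kuratowski compactness and Fatou's lemma.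
Perturb `h = -h_K` to `h e^{tg}`. The covolume of the Wulff shape is homogeneous of degree `n - q`,
so a dilation makes the perturbed Wulff shape a competitor, and comparing first variations at
`t = 0` shows that `φ` is the cone-volume measure of the Wulff shape of `h`.

If `φ = 0`, take `K = z + C`, where only the apex has normals in `Ω_{C°}`.
-/

section InnerProductSpace

variable {E : Type*} [NormedAddCommGroup E] [InnerProductSpace ℝ E]

lemma inner_neg_of_mem_interior {S : Set E} {x u : E} (hx : x ∈ interior S) (hu : u ≠ 0)
    (h : ∀ y ∈ S, ⟪y, u⟫ ≤ 0) : ⟪x, u⟫ < 0 := by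
  have hne : innerSL ℝ u ≠ 0 := fun h0 => hu <| inner_self_eq_zero (𝕜 := ℝ).1 <| by
    simpa using congr($h0 u)
  have himage : innerSL ℝ u '' interior S ⊆ Iic 0 := by
    rintro _ ⟨y, hy, rfl⟩
    simpa [real_inner_comm] using h y (interior_subset hy)
  have hmem := interior_maximal himage ((innerSL ℝ u).isOpenMap_of_ne_zero hne _ isOpen_interior)
    (mem_image_of_mem _ hx)
  simpa [real_inner_comm] using hmem

end InnerProductSpace

lemma mem_biUnion_segment_zero {E : Type*} [AddCommGroup E] [Module ℝ E] {S : Set E} {y : E} :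
    y ∈ ⋃ x ∈ S, segment ℝ 0 x ↔ ∃ x ∈ S, ∃ s ∈ Icc (0 : ℝ) 1, s • x = y := by
  simp [segment_eq_image]

namespace IsGoodCone

variable {n : ℕ} {C : Set (En n)} {x y : En n} {r : ℝ}

lemma isClosed (hC : IsGoodCone n C) : IsClosed C := hC.1

lemma convex (hC : IsGoodCone n C) : Convex ℝ C := hC.2.1

lemma smul_mem (hC : IsGoodCone n C) (hx : x ∈ C) (hr : 0 ≤ r) : r • x ∈ C := hC.2.2.1 x hx r hr

lemma inter_neg (hC : IsGoodCone n C) : C ∩ -C = {0} := hC.2.2.2.1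

lemma interior_nonempty (hC : IsGoodCone n C) : (interior C).Nonempty := hC.2.2.2.2

lemma zero_mem (hC : IsGoodCone n C) : (0 : En n) ∈ C :=
  (hC.inter_neg.symm ▸ rfl : (0 : En n) ∈ C ∩ -C).1

lemma add_mem (hC : IsGoodCone n C) (hx : x ∈ C) (hy : y ∈ C) : x + y ∈ C := by
  have hmid : (2⁻¹ : ℝ) • x + (2⁻¹ : ℝ) • y ∈ C :=
    hC.convex hx hy (by norm_num) (by norm_num) (by norm_num)
  simpa [← smul_add, smul_smul] using hC.smul_mem hmid zero_le_two

lemma smul_mem_interior (hC : IsGoodCone n C) (hr : 0 < r) (hx : x ∈ interior C) :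
    r • x ∈ interior C := by
  have hsub : r • C ⊆ C := by
    rintro _ ⟨y, hy, rfl⟩
    exact hC.smul_mem hy hr.le
  exact interior_mono hsub (interior_smul₀ hr.ne' C ▸ smul_mem_smul_set hx)

lemma smul_mem_interior_iff (hC : IsGoodCone n C) (hr : 0 < r) :
    r • x ∈ interior C ↔ x ∈ interior C := by
  refine ⟨fun h => ?_, hC.smul_mem_interior hr⟩
  simpa [smul_smul, inv_mul_cancel₀ hr.ne'] using hC.smul_mem_interior (inv_pos.2 hr) h

lemma add_mem_interior (hC : IsGoodCone n C) (hx : x ∈ C) (hy : y ∈ interior C) :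
    x + y ∈ interior C := by
  have hsub : x +ᵥ C ⊆ C := by
    rintro _ ⟨z, hz, rfl⟩
    exact hC.add_mem hx hz
  exact interior_mono hsub (interior_vadd x C ▸ vadd_mem_vadd_set hy)

lemma zero_notMem_interior [NeZero n] (hC : IsGoodCone n C) : (0 : En n) ∉ interior C := by
  intro h0
  have hmem (y : En n) : y ∈ C := by
    obtain ⟨e, hepos, he⟩ : ∃ e : ℝ, 0 < e ∧ e • y ∈ C := by
      have hcont : Tendsto (fun e : ℝ => e • y) (𝓝[>] 0) (𝓝 0) := by
        simpa using ((continuous_id.smul continuous_const).tendsto (0 : ℝ)).mono_left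
          (nhdsWithin_le_nhds (s := Ioi 0)) (f := fun e : ℝ => e • y)
      exact (eventually_mem_nhdsWithin.and (hcont (mem_interior_iff_mem_nhds.1 h0))).exists
    simpa [smul_smul, inv_mul_cancel₀ hepos.ne'] using hC.smul_mem he (inv_nonneg.2 hepos.le)
  obtain ⟨x, hx⟩ := exists_ne (0 : En n)
  exact hx (hC.inter_neg.subset ⟨hmem x, hmem (-x)⟩)

lemma ne_zero_of_mem_interior [NeZero n] (hC : IsGoodCone n C) (hx : x ∈ interior C) : x ≠ 0 :=
  fun h => hC.zero_notMem_interior (h ▸ hx)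

end IsGoodCone

/-- The unit vectors of the dual cone, `S^{n-1} ∩ C°`: a compact set containing `Ω_{C°}`. -/
def dualSphere (n : ℕ) (C : Set (En n)) : Set (En n) := Metric.sphere 0 1 ∩ dualCone n C

section DualSphere

variable {n : ℕ} {C : Set (En n)} {x u : En n}

lemma isClosed_dualCone (C : Set (En n)) : IsClosed (dualCone n C) := by
  simp only [dualCone, ofPred_forall]
  exact isClosed_biInter fun y _ => isClosed_le (by fun_prop) (by fun_prop)

lemma isCompact_dualSphere (C : Set (En n)) : IsCompact (dualSphere n C) :=
  (isCompact_sphere _ _).inter_right (isClosed_dualCone C)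

lemma omegaDual_subset_dualSphere (C : Set (En n)) : omegaDual n C ⊆ dualSphere n C :=
  inter_subset_inter_right _ interior_subset

lemma norm_of_mem_dualSphere (hu : u ∈ dualSphere n C) : ‖u‖ = 1 := mem_sphere_zero_iff_norm.1 hu.1

lemma ne_zero_of_mem_dualSphere (hu : u ∈ dualSphere n C) : u ≠ 0 :=
  ne_zero_of_mem_unit_sphere ⟨u, hu.1⟩

lemma neg_inner_nonneg (hx : x ∈ C) (hu : u ∈ dualSphere n C) : 0 ≤ -⟪x, u⟫ := by
  simpa [real_inner_comm] using hu.2 x hx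

lemma neg_inner_pos (hx : x ∈ interior C) (hu : u ∈ dualSphere n C) : 0 < -⟪x, u⟫ :=
  neg_pos.2 <| inner_neg_of_mem_interior hx (ne_zero_of_mem_dualSphere hu) fun y hy => by
    simpa using neg_inner_nonneg hy hu

lemma neg_inner_le_norm (x : En n) (hu : u ∈ dualSphere n C) : -⟪x, u⟫ ≤ ‖x‖ := by
  simpa [norm_of_mem_dualSphere hu] using (neg_le_abs _).trans (abs_real_inner_le_norm x u)

lemma exists_pos_forall_le_neg_inner (hx : x ∈ interior C) :
    ∃ δ > 0, ∀ u ∈ dualSphere n C, δ ≤ -⟪x, u⟫ := by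
  rcases (dualSphere n C).eq_empty_or_nonempty with hempty | hne
  · exact ⟨1, one_pos, by simp [hempty]⟩
  · obtain ⟨u, hu, hmin⟩ := (isCompact_dualSphere C).exists_isMinOn hne
      (f := fun u => -⟪x, u⟫) (by fun_prop)
    exact ⟨_, neg_inner_pos hx hu, fun v hv => hmin hv⟩

end DualSphere

section PseudoCone

variable {n : ℕ} {C K : Set (En n)}

lemma IsGoodCone.recCone_subset (hC : IsGoodCone n C) (hne : K.Nonempty) (hKC : K ⊆ C) :
    recCone n K ⊆ C := by
  intro z hz
  obtain ⟨x, hx⟩ := hne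
  have hmem (k : ℕ) : (1 / ((k : ℝ) + 1)) • x + z ∈ C := by
    have hk : (0 : ℝ) < k + 1 := by positivity
    simpa [smul_smul, hk.ne'] using hC.smul_mem (hKC (hz x hx _ hk.le)) (one_div_pos.2 hk).le
  have hlim : Tendsto (fun k : ℕ => (1 / ((k : ℝ) + 1)) • x + z) atTop (𝓝 z) := by
    simpa using ((tendsto_one_div_add_atTop_nhds_zero_nat (𝕜 := ℝ)).smul_const x).add_const z
  exact hC.isClosed.mem_of_tendsto hlim (Eventually.of_forall hmem)

lemma IsGoodCone.isCPseudoCone_of_add_mem (hC : IsGoodCone n C) (hne : K.Nonempty)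
    (hclosed : IsClosed K) (hconv : Convex ℝ K) (h0 : (0 : En n) ∉ K) (hKC : K ⊆ C)
    (hadd : ∀ x ∈ K, ∀ c ∈ C, x + c ∈ K) : IsCPseudoCone n C K := by
  refine ⟨⟨hne, hclosed, hconv, h0, ?_⟩, Subset.antisymm (hC.recCone_subset hne hKC) ?_⟩
  · rintro l hl _ ⟨y, hy, rfl⟩
    simpa [sub_smul] using hadd y hy _ (hC.smul_mem (hKC hy) (sub_nonneg.2 hl))
  · exact fun c hc x hx t ht => hadd x hx _ (hC.smul_mem hc ht)

namespace IsCPseudoCone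

lemma isClosed (hK : IsCPseudoCone n C K) : IsClosed K := hK.1.2.1

lemma convex (hK : IsCPseudoCone n C K) : Convex ℝ K := hK.1.2.2.1

lemma add_mem (hK : IsCPseudoCone n C K) {x c : En n} (hx : x ∈ K) (hc : c ∈ C) : x + c ∈ K := by
  simpa using (hK.2 ▸ hc : c ∈ recCone n K) x hx 1 zero_le_one

lemma subset (hK : IsCPseudoCone n C K) : K ⊆ C := by
  intro x hx
  rw [← hK.2]
  intro y hy t ht
  have ht1 : 0 < 1 + t := by positivity
  have hmem : (1 / (1 + t)) • y + (t / (1 + t)) • x ∈ K :=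
    hK.convex hy hx (by positivity) (by positivity) (by field_simp)
  have hscaled := hK.1.2.2.2.2 (1 + t) (by linarith) (smul_mem_smul_set hmem)
  rwa [smul_add, smul_smul, smul_smul, mul_one_div_cancel ht1.ne', one_smul,
    mul_div_cancel₀ _ ht1.ne'] at hscaled

end IsCPseudoCone

end PseudoCone

section Wulff

variable {n : ℕ} {C ϖ : Set (En n)} {H : En n → ℝ} {x : En n}

lemma mem_wulff_iff : x ∈ wulff n C ϖ H ↔ x ∈ C ∧ ∀ u ∈ ϖ, H u ≤ -⟪x, u⟫ := by
  simp [wulff, le_neg]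

lemma isClosed_wulff (hC : IsClosed C) : IsClosed (wulff n C ϖ H) :=
  hC.inter <| isClosed_biInter fun _ _ => isClosed_le (by fun_prop) (by fun_prop)

lemma convex_wulff (hC : Convex ℝ C) : Convex ℝ (wulff n C ϖ H) :=
  hC.inter <| convex_iInter₂ fun _ _ => convex_halfSpace_le
    ⟨fun _ _ => inner_add_left _ _ _, fun _ _ => real_inner_smul_left _ _ _⟩ _

lemma IsGoodCone.add_mem_wulff (hC : IsGoodCone n C) {c : En n}
    (hx : x ∈ wulff n C (dualSphere n C) H) (hc : c ∈ C) :
    x + c ∈ wulff n C (dualSphere n C) H := by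
  obtain ⟨hxC, hxH⟩ := mem_wulff_iff.1 hx
  refine mem_wulff_iff.2 ⟨hC.add_mem hxC hc, fun u hu => ?_⟩
  rw [inner_add_left, neg_add]
  exact (hxH u hu).trans (le_add_of_nonneg_right (neg_inner_nonneg hc hu))

lemma IsGoodCone.isCPseudoCone_wulff (hC : IsGoodCone n C)
    (hne : (wulff n C (dualSphere n C) H).Nonempty) (hpos : ∃ u ∈ dualSphere n C, 0 < H u) :
    IsCPseudoCone n C (wulff n C (dualSphere n C) H) := by
  refine hC.isCPseudoCone_of_add_mem hne (isClosed_wulff hC.isClosed) (convex_wulff hC.convex)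
    (fun h0 => ?_) inter_subset_left fun x hx c hc => hC.add_mem_wulff hx hc
  obtain ⟨u, hu, hHu⟩ := hpos
  simpa [hHu.not_ge] using (mem_wulff_iff.1 h0).2 u hu

end Wulff

/-- The absolute support function `-h_K`, as a function that vanishes where it would be negative.
On `dualSphere n C` the truncation is void for `K ⊆ C`, but it makes the function upper
semicontinuous everywhere. -/
def absSuppFn {n : ℕ} (K : Set (En n)) (u : En n) : ℝ := ⨅ y : K, max 0 (-⟪(y : En n), u⟫)

section AbsSuppFn

variable {n : ℕ} {C K : Set (En n)} {u : En n}

lemma bddBelow_range_max_neg_inner (K : Set (En n)) (u : En n) :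
    BddBelow (range fun y : K => max 0 (-⟪(y : En n), u⟫)) :=
  ⟨0, by rintro _ ⟨y, rfl⟩; exact le_max_left _ _⟩

lemma absSuppFn_nonneg (K : Set (En n)) (u : En n) : 0 ≤ absSuppFn K u :=
  Real.iInf_nonneg fun _ => le_max_left _ _

lemma absSuppFn_le_max {y : En n} (hy : y ∈ K) (u : En n) : absSuppFn K u ≤ max 0 (-⟪y, u⟫) :=
  ciInf_le (bddBelow_range_max_neg_inner K u) (⟨y, hy⟩ : K)

lemma absSuppFn_le (hKC : K ⊆ C) {y : En n} (hy : y ∈ K) (hu : u ∈ dualSphere n C) :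
    absSuppFn K u ≤ -⟪y, u⟫ := by
  simpa [max_eq_right (neg_inner_nonneg (hKC hy) hu)] using absSuppFn_le_max hy u

lemma le_absSuppFn (hne : K.Nonempty) {c : ℝ} (h : ∀ y ∈ K, c ≤ max 0 (-⟪y, u⟫)) :
    c ≤ absSuppFn K u :=
  haveI := hne.to_subtype
  le_ciInf fun y => h y y.2

lemma upperSemicontinuous_absSuppFn (K : Set (En n)) : UpperSemicontinuous (absSuppFn K) :=
  upperSemicontinuous_ciInf (bddBelow_range_max_neg_inner K) fun y =>
    Continuous.upperSemicontinuous (by fun_prop)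

lemma subset_wulff_absSuppFn (hKC : K ⊆ C) : K ⊆ wulff n C (dualSphere n C) (absSuppFn K) :=
  fun _ hy => mem_wulff_iff.2 ⟨hKC hy, fun _ hu => absSuppFn_le hKC hy hu⟩

lemma mem_normalsAt_wulff_absSuppFn (hC : IsGoodCone n C) (hne : K.Nonempty) (hKC : K ⊆ C)
    {x : En n} (hx : x ∈ wulff n C (dualSphere n C) (absSuppFn K)) :
    u ∈ normalsAt n (wulff n C (dualSphere n C) (absSuppFn K)) x ↔
      u ∈ dualSphere n C ∧ absSuppFn K u = -⟪x, u⟫ := by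
  constructor
  · rintro ⟨hnorm, hmax⟩
    have hu : u ∈ dualSphere n C := by
      refine ⟨mem_sphere_zero_iff_norm.2 hnorm, fun c hc => ?_⟩
      simpa [inner_add_left, real_inner_comm] using hmax _ (hC.add_mem_wulff hx hc)
    refine ⟨hu, le_antisymm ((mem_wulff_iff.1 hx).2 u hu) (le_absSuppFn hne fun y hy => ?_)⟩
    exact le_max_of_le_right (neg_le_neg (hmax y (subset_wulff_absSuppFn hKC hy)))
  · rintro ⟨hu, heq⟩
    refine ⟨norm_of_mem_dualSphere hu, fun y hy => neg_le_neg_iff.1 ?_⟩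
    exact heq ▸ (mem_wulff_iff.1 hy).2 u hu

end AbsSuppFn

/-- The functions on `dualSphere n C` whose Wulff shape is studied: nonnegative, bounded above and
not identically zero. -/
structure IsAdmissible (n : ℕ) (C : Set (En n)) (H : En n → ℝ) : Prop where
  nonneg : ∀ u ∈ dualSphere n C, 0 ≤ H u
  bddAbove : ∃ R, ∀ u ∈ dualSphere n C, H u ≤ R
  exists_pos : ∃ u ∈ dualSphere n C, 0 < H u

/-- The radial function of the Wulff shape of `H`, set to `0` off `int C`, where it need not be
finite. -/
def wulffRadial (n : ℕ) (C : Set (En n)) (H : En n → ℝ) : En n → ℝ :=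
  (interior C).indicator (rho n (wulff n C (dualSphere n C) H))

lemma wulffRadial_of_notMem {n : ℕ} {C : Set (En n)} {H : En n → ℝ} {x : En n}
    (hx : x ∉ interior C) : wulffRadial n C H x = 0 :=
  indicator_of_notMem hx _

namespace IsAdmissible

variable {n : ℕ} {C : Set (En n)} {H : En n → ℝ} {x u : En n} {c r : ℝ}

lemma pos_of_forall_le (hH : IsAdmissible n C H) (hx : x ∈ interior C)
    (h : ∀ u ∈ dualSphere n C, H u ≤ c * -⟪x, u⟫) : 0 < c := by
  obtain ⟨u, hu, hHu⟩ := hH.exists_pos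
  exact pos_of_mul_pos_left (hHu.trans_le (h u hu)) (neg_inner_pos hx hu).le

lemma smul_mem_wulff_iff (hH : IsAdmissible n C H) (hC : IsGoodCone n C) (hx : x ∈ interior C) :
    c • x ∈ wulff n C (dualSphere n C) H ↔ ∀ u ∈ dualSphere n C, H u ≤ c * -⟪x, u⟫ := by
  simp only [mem_wulff_iff, real_inner_smul_left, ← mul_neg, and_iff_right_iff_imp]
  exact fun h => hC.smul_mem (interior_subset hx) (hH.pos_of_forall_le hx h).le

lemma exists_smul_mem_wulff (hH : IsAdmissible n C H) (hC : IsGoodCone n C)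
    (hx : x ∈ interior C) : ∃ c : ℝ, c • x ∈ wulff n C (dualSphere n C) H := by
  obtain ⟨R, hR⟩ := hH.bddAbove
  obtain ⟨δ, hδ, hδle⟩ := exists_pos_forall_le_neg_inner hx
  refine ⟨|R| / δ, (hH.smul_mem_wulff_iff hC hx).2 fun u hu => ?_⟩
  calc H u ≤ |R| := (hR u hu).trans (le_abs_self R)
    _ = |R| / δ * δ := (div_mul_cancel₀ _ hδ.ne').symm
    _ ≤ |R| / δ * -⟪x, u⟫ := by gcongr; exact hδle u hu

lemma wulffRadial_le (hH : IsAdmissible n C H) (hC : IsGoodCone n C) (hx : x ∈ interior C)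
    (h : ∀ u ∈ dualSphere n C, H u ≤ c * -⟪x, u⟫) : wulffRadial n C H x ≤ c := by
  rw [wulffRadial, indicator_of_mem hx]
  exact csInf_le ⟨0, fun t ht => (hH.pos_of_forall_le hx
    ((hH.smul_mem_wulff_iff hC hx).1 ht)).le⟩ ((hH.smul_mem_wulff_iff hC hx).2 h)

lemma le_wulffRadial_mul (hH : IsAdmissible n C H) (hC : IsGoodCone n C) (hx : x ∈ interior C)
    (hu : u ∈ dualSphere n C) : H u ≤ wulffRadial n C H x * -⟪x, u⟫ := by
  rw [wulffRadial, indicator_of_mem hx, ← div_le_iff₀ (neg_inner_pos hx hu)]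
  refine le_csInf (hH.exists_smul_mem_wulff hC hx) fun t ht => ?_
  rw [div_le_iff₀ (neg_inner_pos hx hu)]
  exact (hH.smul_mem_wulff_iff hC hx).1 ht u hu

lemma wulffRadial_le_iff (hH : IsAdmissible n C H) (hC : IsGoodCone n C) (hx : x ∈ interior C) :
    wulffRadial n C H x ≤ c ↔ ∀ u ∈ dualSphere n C, H u ≤ c * -⟪x, u⟫ :=
  ⟨fun h _ hu => (hH.le_wulffRadial_mul hC hx hu).trans
    (mul_le_mul_of_nonneg_right h (neg_inner_pos hx hu).le), hH.wulffRadial_le hC hx⟩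

lemma wulffRadial_pos (hH : IsAdmissible n C H) (hC : IsGoodCone n C) (hx : x ∈ interior C) :
    0 < wulffRadial n C H x :=
  hH.pos_of_forall_le hx fun _ hu => hH.le_wulffRadial_mul hC hx hu

lemma wulffRadial_nonneg (hH : IsAdmissible n C H) (hC : IsGoodCone n C) (x : En n) :
    0 ≤ wulffRadial n C H x := by
  by_cases hx : x ∈ interior C
  · exact (hH.wulffRadial_pos hC hx).le
  · exact (wulffRadial_of_notMem hx).ge

lemma wulffRadial_smul (hH : IsAdmissible n C H) (hC : IsGoodCone n C) (hr : 0 < r) (x : En n) :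
    wulffRadial n C H (r • x) = r⁻¹ * wulffRadial n C H x := by
  by_cases hx : x ∈ interior C
  · refine eq_of_forall_ge_iff fun c => ?_
    rw [inv_mul_le_iff₀ hr, hH.wulffRadial_le_iff hC hx,
      hH.wulffRadial_le_iff hC (hC.smul_mem_interior hr hx)]
    simp only [real_inner_smul_left, mul_assoc, neg_mul_eq_mul_neg, mul_left_comm r]
  · rw [wulffRadial_of_notMem hx, mul_zero,
      wulffRadial_of_notMem (mt (hC.smul_mem_interior_iff hr).1 hx)]

lemma mem_wulff_iff_wulffRadial_le_one (hH : IsAdmissible n C H) (hC : IsGoodCone n C)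
    (hx : x ∈ interior C) : x ∈ wulff n C (dualSphere n C) H ↔ wulffRadial n C H x ≤ 1 := by
  rw [hH.wulffRadial_le_iff hC hx, ← hH.smul_mem_wulff_iff hC hx, one_smul]

lemma measurable_wulffRadial (hH : IsAdmissible n C H) (hC : IsGoodCone n C) :
    Measurable (wulffRadial n C H) := by
  refine measurable_of_Iic fun c => ?_
  rcases lt_or_ge c 0 with hc | hc
  · convert MeasurableSet.empty
    exact eq_empty_of_forall_notMem fun x hx => (hc.trans_le (hH.wulffRadial_nonneg hC x)).not_ge hx
  · have hpre : wulffRadial n C H ⁻¹' Iic c = (interior C)ᶜ ∪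
        (interior C ∩ ⋂ u ∈ dualSphere n C, {x | H u ≤ c * -⟪x, u⟫}) := by
      ext x
      by_cases hx : x ∈ interior C
      · simp [hx, hH.wulffRadial_le_iff hC hx]
      · simp [hx, wulffRadial_of_notMem hx, hc]
    rw [hpre]
    refine isOpen_interior.measurableSet.compl.union (isOpen_interior.measurableSet.inter ?_)
    exact (isClosed_biInter fun u _ => isClosed_le (by fun_prop) (by fun_prop)).measurableSet

lemma mem_frontier_wulff (hH : IsAdmissible n C H) (hC : IsGoodCone n C) (hx : x ∈ interior C)
    (h1 : wulffRadial n C H x = 1) : x ∈ frontier (wulff n C (dualSphere n C) H) := by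
  rw [(isClosed_wulff hC.isClosed).frontier_eq]
  refine ⟨(hH.mem_wulff_iff_wulffRadial_le_one hC hx).2 h1.le, fun hint => ?_⟩
  have hlim : Tendsto (fun r : ℝ => r • x) (𝓝[<] 1) (𝓝 x) := by
    simpa using ((continuous_id.smul continuous_const).tendsto (1 : ℝ)).mono_left
      (nhdsWithin_le_nhds (s := Iio 1)) (f := fun r : ℝ => r • x)
  obtain ⟨r, hr, hr0, hr1⟩ := ((hlim.eventually (mem_interior_iff_mem_nhds.1 hint)).and
    (Ioo_mem_nhdsLT one_pos)).exists
  have hle := (hH.mem_wulff_iff_wulffRadial_le_one hC (hC.smul_mem_interior hr0 hx)).1 hr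
  rw [hH.wulffRadial_smul hC hr0, h1, mul_one] at hle
  exact hr1.not_ge ((inv_le_one₀ hr0).1 hle)

end IsAdmissible

section PolarCoordinates

variable {E : Type*} [NormedAddCommGroup E] [NormedSpace ℝ E] [FiniteDimensional ℝ E]
  [Nontrivial E] [MeasurableSpace E] [BorelSpace E] (μ : Measure E) [μ.IsAddHaarMeasure]

open Module (finrank)

lemma lintegral_eq_lintegral_toSphere {f : E → ℝ≥0∞} (hf : Measurable f) :
    ∫⁻ x, f x ∂μ = ∫⁻ ω, (∫⁻ r in Ioi (0 : ℝ),
      ENNReal.ofReal (r ^ (finrank ℝ E - 1)) * f (r • (ω : E))) ∂μ.toSphere := by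
  have hf' : Measurable fun p : Metric.sphere (0 : E) 1 × Ioi (0 : ℝ) => f (p.2.1 • p.1.1) := by
    fun_prop
  calc ∫⁻ x, f x ∂μ = ∫⁻ x : ({0}ᶜ : Set E), f x ∂(μ.comap (↑)) := by
        rw [lintegral_subtype_comap (measurableSet_singleton _).compl, restrict_compl_singleton]
    _ = ∫⁻ p, f (p.2.1 • p.1.1) ∂(μ.toSphere.prod (.volumeIoiPow (finrank ℝ E - 1))) := by
        rw [← μ.measurePreserving_homeomorphUnitSphereProd.lintegral_comp hf']
        refine lintegral_congr fun x => ?_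
        simp [smul_inv_smul₀ (norm_ne_zero_iff.2 x.2)]
    _ = _ := by
        rw [lintegral_prod _ hf'.aemeasurable]
        refine lintegral_congr fun ω => ?_
        rw [Measure.volumeIoiPow, lintegral_withDensity_eq_lintegral_mul _ (by fun_prop)
          (by fun_prop)]
        exact lintegral_subtype_comap measurableSet_Ioi
          fun r : ℝ => ENNReal.ofReal (r ^ (finrank ℝ E - 1)) * f (r • (ω : E))

lemma lintegral_Ioo_rpow_sub_one {a T : ℝ} (ha : 0 < a) (hT : 0 ≤ T) :
    ∫⁻ r in Ioo 0 T, ENNReal.ofReal (r ^ (a - 1)) = ENNReal.ofReal (T ^ a / a) := by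
  have hint := intervalIntegral.intervalIntegrable_rpow' (a := 0) (b := T) (r := a - 1)
    (by linarith)
  rw [Measure.restrict_congr_set Ioo_ae_eq_Ioc, ← ofReal_integral_eq_lintegral_ofReal hint.1,
    ← intervalIntegral.integral_of_le hT, integral_rpow (Or.inl (by linarith))]
  · simp [Real.zero_rpow ha.ne']
  · filter_upwards [ae_restrict_mem measurableSet_Ioc] with r hr using Real.rpow_nonneg hr.1.le _

variable {q : ℝ} {f : E → ℝ≥0∞} {τ : E → ℝ}

lemma setLIntegral_norm_lt_eq_lintegral_toSphere (hq : q < finrank ℝ E) (hf : Measurable f)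
    (hfhom : ∀ r : ℝ, 0 < r → ∀ x, f (r • x) = ENNReal.ofReal (r ^ (-q)) * f x)
    (hτ : Measurable τ) (hτ0 : ∀ x, 0 ≤ τ x) (hτhom : ∀ r : ℝ, 0 < r → ∀ x, τ (r • x) = τ x) :
    ∫⁻ x in {x | ‖x‖ < τ x}, f x ∂μ =
      ∫⁻ ω, f ω * ENNReal.ofReal (τ ω ^ (finrank ℝ E - q) / (finrank ℝ E - q)) ∂μ.toSphere := by
  have hS : MeasurableSet {x | ‖x‖ < τ x} := measurableSet_lt measurable_norm hτ
  rw [← lintegral_indicator hS, lintegral_eq_lintegral_toSphere μ (hf.indicator hS)]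
  refine lintegral_congr fun ω => ?_
  have hω : ‖(ω : E)‖ = 1 := norm_eq_of_mem_sphere ω
  rw [← lintegral_Ioo_rpow_sub_one (sub_pos.2 hq) (hτ0 ω), ← lintegral_const_mul _ (by fun_prop),
    ← lintegral_indicator measurableSet_Ioo, ← lintegral_indicator measurableSet_Ioi]
  refine lintegral_congr fun r => ?_
  by_cases hr : 0 < r
  · have hmem : r • (ω : E) ∈ {x | ‖x‖ < τ x} ↔ r ∈ Ioo 0 (τ ω) := by
      simp [norm_smul, hω, hτhom r hr, abs_of_pos hr, hr]
    have hexp : r ^ (finrank ℝ E - 1) * r ^ (-q) = r ^ (finrank ℝ E - q - 1) := by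
      rw [← Real.rpow_natCast, Nat.cast_pred Module.finrank_pos, ← Real.rpow_add hr]
      ring_nf
    by_cases hrτ : r ∈ Ioo 0 (τ ω)
    · rw [indicator_of_mem (mem_Ioi.2 hr), indicator_of_mem (hmem.2 hrτ), indicator_of_mem hrτ,
        hfhom r hr, ← mul_assoc, ← ENNReal.ofReal_mul (by positivity), hexp, mul_comm]
    · simp [indicator_of_notMem (mt hmem.1 hrτ), indicator_of_notMem hrτ]
  · rw [indicator_of_notMem (by simpa using hr), indicator_of_notMem fun h => hr h.1]

theorem setLIntegral_norm_lt_eq_setLIntegral_ball (hq : q < finrank ℝ E) (hf : Measurable f)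
    (hfhom : ∀ r : ℝ, 0 < r → ∀ x, f (r • x) = ENNReal.ofReal (r ^ (-q)) * f x)
    (hτ : Measurable τ) (hτ0 : ∀ x, 0 ≤ τ x) (hτhom : ∀ r : ℝ, 0 < r → ∀ x, τ (r • x) = τ x) :
    ∫⁻ x in {x | ‖x‖ < τ x}, f x ∂μ =
      ∫⁻ x in Metric.ball 0 1, f x * ENNReal.ofReal (τ x ^ (finrank ℝ E - q)) ∂μ := by
  have hball : Metric.ball (0 : E) 1 = {x | ‖x‖ < 1} := by ext; simp
  rw [hball, setLIntegral_norm_lt_eq_lintegral_toSphere μ hq hf hfhom hτ hτ0 hτhom,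
    setLIntegral_norm_lt_eq_lintegral_toSphere (τ := fun _ => 1) μ hq (by fun_prop)
      (fun r hr x => by rw [hfhom r hr, hτhom r hr, mul_assoc]) measurable_const
      (fun _ => zero_le_one) fun _ _ _ => rfl]
  refine lintegral_congr fun ω => ?_
  rw [Real.one_rpow, mul_assoc, ← ENNReal.ofReal_mul (Real.rpow_nonneg (hτ0 ω) _),
    mul_one_div]

end PolarCoordinates

/-- The weighted Lebesgue measure `H_Θ^n` on `int C`. -/
def coneMeasure (n : ℕ) (C : Set (En n)) (Θ : En n → ℝ) : Measure (En n) :=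
  (HTheta n Θ).restrict (interior C)

/-- The Lebesgue density of `coneMeasure n C Θ`. -/
def coneDensity (n : ℕ) (C : Set (En n)) (Θ : En n → ℝ) : En n → ℝ≥0∞ :=
  (interior C).indicator fun y => ENNReal.ofReal (Θ y)

/-- Measures with mass in `int C` that are homogeneous of degree `a` as in polar coordinates. The
field `polar` is homogeneity integrated over radially bounded regions: both sides are integrals over
directions, and the radial integral of a density of degree `a - n` up to radius `τ` is `τ ^ a` times
the one up to radius `1`. -/
structure IsConeMeasure (n : ℕ) (C : Set (En n)) (a : ℝ) (μ : Measure (En n)) : Prop where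
  degree_pos : 0 < a
  absolutelyContinuous : μ ≪ volume
  ae_mem_interior : ∀ᵐ x ∂μ, x ∈ interior C
  ball_pos : 0 < μ (Metric.ball 0 1)
  polar : ∀ τ : En n → ℝ, Measurable τ → (∀ x, 0 ≤ τ x) →
    (∀ r : ℝ, 0 < r → ∀ x, τ (r • x) = τ x) →
    μ {x | ‖x‖ < τ x} = ∫⁻ x in Metric.ball 0 1, ENNReal.ofReal (τ x ^ a) ∂μ

section ConeMeasure

variable {n : ℕ} {C : Set (En n)} {q : ℝ} {Θ : En n → ℝ}

lemma coneMeasure_eq_withDensity (C : Set (En n)) (Θ : En n → ℝ) :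
    coneMeasure n C Θ = volume.withDensity (coneDensity n C Θ) := by
  rw [coneMeasure, HTheta, restrict_withDensity isOpen_interior.measurableSet, coneDensity,
    withDensity_indicator isOpen_interior.measurableSet]

lemma coneMeasure_absolutelyContinuous (C : Set (En n)) (Θ : En n → ℝ) :
    coneMeasure n C Θ ≪ volume :=
  coneMeasure_eq_withDensity C Θ ▸ withDensity_absolutelyContinuous _ _

lemma HTheta_eq_coneMeasure (hC : IsGoodCone n C) (Θ : En n → ℝ) {A : Set (En n)} (hA : A ⊆ C) :
    HTheta n Θ A = coneMeasure n C Θ A := by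
  have hfr : HTheta n Θ (frontier C) = 0 :=
    withDensity_absolutelyContinuous _ _ (hC.convex.addHaar_frontier volume)
  rw [coneMeasure, Measure.restrict_apply' isOpen_interior.measurableSet]
  refine (measure_inter_conull' (measure_mono_null (fun x hx => ?_) hfr)).symm
  exact ⟨subset_closure (hA hx.1), hx.2⟩

lemma mem_diff_zero_of_mem_interior [NeZero n] (hC : IsGoodCone n C) {x : En n}
    (hx : x ∈ interior C) : x ∈ C \ {0} :=
  ⟨interior_subset hx, hC.ne_zero_of_mem_interior hx⟩

lemma measurable_coneDensity [NeZero n] (hC : IsGoodCone n C) (hΘ : IsThetaWeight n C q Θ) :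
    Measurable (coneDensity n C Θ) := by
  classical
  rw [coneDensity, ← piecewise_eq_indicator]
  exact (ENNReal.continuous_ofReal.comp_continuousOn <| hΘ.1.mono fun x =>
    mem_diff_zero_of_mem_interior hC).measurable_piecewise continuousOn_const
      isOpen_interior.measurableSet

lemma coneDensity_smul [NeZero n] (hC : IsGoodCone n C) (hΘ : IsThetaWeight n C q Θ) {r : ℝ}
    (hr : 0 < r) (x : En n) :
    coneDensity n C Θ (r • x) = ENNReal.ofReal (r ^ (-q)) * coneDensity n C Θ x := by
  by_cases hx : x ∈ interior C
  · rw [coneDensity, indicator_of_mem hx, indicator_of_mem (hC.smul_mem_interior hr hx),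
      hΘ.2.2 x (mem_diff_zero_of_mem_interior hC hx) r hr, ENNReal.ofReal_mul (by positivity)]
  · rw [coneDensity, indicator_of_notMem hx, mul_zero,
      indicator_of_notMem (mt (hC.smul_mem_interior_iff hr).1 hx)]

lemma exists_coneDensity_le [NeZero n] (hC : IsGoodCone n C) (hΘ : IsThetaWeight n C q Θ) :
    ∃ M : ℝ≥0, ∀ x ≠ 0, coneDensity n C Θ x ≤ M * ENNReal.ofReal (‖x‖ ^ (-q)) := by
  obtain ⟨M, hM⟩ := ((isCompact_sphere (0 : En n) 1).inter_right hC.isClosed).bddAbove_image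
    (hΘ.1.mono fun x hx => ⟨hx.2, ne_zero_of_mem_unit_sphere ⟨x, hx.1⟩⟩)
  refine ⟨M.toNNReal, fun x hx => ?_⟩
  have hpos : 0 < ‖x‖ := norm_pos_iff.2 hx
  have hunit : coneDensity n C Θ (‖x‖⁻¹ • x) ≤ M.toNNReal := by
    by_cases hx' : ‖x‖⁻¹ • x ∈ interior C
    · rw [coneDensity, indicator_of_mem hx']
      refine ENNReal.ofReal_le_ofReal (hM (mem_image_of_mem Θ ⟨?_, interior_subset hx'⟩))
      rw [mem_sphere_zero_iff_norm, norm_smul, norm_inv, norm_norm, inv_mul_cancel₀ hpos.ne']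
    · rw [coneDensity, indicator_of_notMem hx']
      exact zero_le
  calc coneDensity n C Θ x = coneDensity n C Θ (‖x‖ • ‖x‖⁻¹ • x) := by
        rw [smul_inv_smul₀ hpos.ne']
    _ ≤ _ := by rw [coneDensity_smul hC hΘ hpos, mul_comm]; gcongr

lemma coneMeasure_ball_lt_top [NeZero n] (hC : IsGoodCone n C) (hΘ : IsThetaWeight n C q Θ)
    (hq : q < n) : coneMeasure n C Θ (Metric.ball 0 1) < ∞ := by
  obtain ⟨M, hM⟩ := exists_coneDensity_le hC hΘ
  have hball : Metric.ball (0 : En n) 1 = {x | ‖x‖ < 1} := by ext; simp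
  rw [coneMeasure_eq_withDensity, withDensity_apply _ Metric.isOpen_ball.measurableSet, hball,
    setLIntegral_norm_lt_eq_lintegral_toSphere (τ := fun _ => 1) volume
      (by rwa [finrank_euclideanSpace_fin]) (measurable_coneDensity hC hΘ)
      (fun r hr => coneDensity_smul hC hΘ hr) measurable_const (fun _ => zero_le_one)
      fun _ _ _ => rfl]
  have hsphere : ∀ ω : Metric.sphere (0 : En n) 1, coneDensity n C Θ ω ≤ M := fun ω => by
    simpa [norm_eq_of_mem_sphere ω] using hM ω (ne_zero_of_mem_unit_sphere ω)
  refine (lintegral_mono fun ω => mul_le_mul_left (hsphere ω) _).trans_lt ?_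
  rw [lintegral_const]
  exact ENNReal.mul_lt_top (ENNReal.mul_lt_top ENNReal.coe_lt_top ENNReal.ofReal_lt_top)
    (measure_lt_top _ _)

lemma coneMeasure_ball_pos [NeZero n] (hC : IsGoodCone n C) (hΘ : IsThetaWeight n C q Θ) :
    0 < coneMeasure n C Θ (Metric.ball 0 1) := by
  have hsupp : Function.support (coneDensity n C Θ) ∩ Metric.ball 0 1 =
      interior C ∩ Metric.ball 0 1 := by
    ext x
    refine and_congr_left fun _ => ?_
    by_cases hx : x ∈ interior C
    · simp [coneDensity, hx, hΘ.2.1 x (mem_diff_zero_of_mem_interior hC hx)]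
    · simp [coneDensity, hx]
  rw [coneMeasure_eq_withDensity, withDensity_apply _ Metric.isOpen_ball.measurableSet,
    setLIntegral_pos_iff (measurable_coneDensity hC hΘ), hsupp]
  obtain ⟨z, hz⟩ := hC.interior_nonempty
  have hz0 : 0 < ‖z‖ := norm_pos_iff.2 (hC.ne_zero_of_mem_interior hz)
  refine (isOpen_interior.inter Metric.isOpen_ball).measure_pos _
    ⟨(2 * ‖z‖)⁻¹ • z, hC.smul_mem_interior (by positivity) hz, ?_⟩
  rw [mem_ball_zero_iff, norm_smul, norm_inv, norm_mul, norm_norm, mul_inv, mul_assoc,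
    inv_mul_cancel₀ hz0.ne']
  norm_num

theorem isConeMeasure_coneMeasure [NeZero n] (hC : IsGoodCone n C) (hΘ : IsThetaWeight n C q Θ)
    (hq : q < n) : IsConeMeasure n C (n - q) (coneMeasure n C Θ) where
  degree_pos := sub_pos.2 hq
  absolutelyContinuous := coneMeasure_absolutelyContinuous C Θ
  ae_mem_interior := ae_restrict_mem isOpen_interior.measurableSet
  ball_pos := coneMeasure_ball_pos hC hΘ
  polar τ hτ hτ0 hτhom := by
    have hmeas := measurable_coneDensity hC hΘ
    have hpolar := setLIntegral_norm_lt_eq_setLIntegral_ball (volume : Measure (En n)) (q := q)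
      (by rwa [finrank_euclideanSpace_fin]) hmeas (fun r hr => coneDensity_smul hC hΘ hr) hτ hτ0
      hτhom
    rw [finrank_euclideanSpace_fin] at hpolar
    rw [coneMeasure_eq_withDensity, withDensity_apply _ (measurableSet_lt measurable_norm hτ),
      hpolar, setLIntegral_withDensity_eq_setLIntegral_mul _ hmeas (by fun_prop)
        Metric.isOpen_ball.measurableSet]
    rfl

end ConeMeasure

lemma rpow_neg_le_two_rpow_mul_one_add_rpow_neg {q s : ℝ} (hq : 0 ≤ q) (hs : 1 ≤ s) :
    s ^ (-q) ≤ 2 ^ q * (1 + s) ^ (-q) := by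
  rw [Real.rpow_neg (by positivity), Real.rpow_neg (by positivity), ← div_eq_mul_inv,
    ← Real.div_rpow two_pos.le (by positivity), ← Real.inv_rpow (by positivity)]
  gcongr
  rw [inv_eq_one_div, div_le_div_iff₀ (by positivity) (by positivity)]
  linarith

section Tail

variable {E : Type*} [NormedAddCommGroup E] [NormedSpace ℝ E]

/-- Comparison of `s⁻ᵠ` with the sum of `s⁻ᵠ⁻¹` along the ray: about `s / ‖z‖` of the points
`x + j z` stay within norm `2 s`. -/
lemma ofReal_rpow_neg_le_tsum {q : ℝ} (hq : 0 < q) {z : E} (hz : z ≠ 0) (x : E) :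
    ENNReal.ofReal ((1 + ‖x‖) ^ (-q)) ≤ ENNReal.ofReal (‖z‖ * 2 ^ (q + 1)) *
      ∑' j : ℕ, ENNReal.ofReal ((1 + ‖x + (j : ℝ) • z‖) ^ (-(q + 1))) := by
  have hb : 0 < ‖z‖ := norm_pos_iff.2 hz
  have ha : 0 < 1 + ‖x‖ := by positivity
  set N := ⌈(1 + ‖x‖) / ‖z‖⌉₊
  have hterm : ∀ j ∈ Finset.range N, ENNReal.ofReal ((2 * (1 + ‖x‖)) ^ (-(q + 1))) ≤
      ENNReal.ofReal ((1 + ‖x + (j : ℝ) • z‖) ^ (-(q + 1))) := by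
    intro j hj
    have hj' : j * ‖z‖ < 1 + ‖x‖ := (lt_div_iff₀ hb).1 (Nat.lt_ceil.1 (Finset.mem_range.1 hj))
    have hnorm : ‖x + (j : ℝ) • z‖ ≤ ‖x‖ + j * ‖z‖ :=
      (norm_add_le _ _).trans_eq (by rw [norm_smul, Real.norm_natCast])
    exact ENNReal.ofReal_le_ofReal <|
      Real.rpow_le_rpow_of_nonpos (by positivity) (by linarith) (by linarith)
  have hsum : (N : ℝ≥0∞) * ENNReal.ofReal ((2 * (1 + ‖x‖)) ^ (-(q + 1))) ≤
      ∑' j : ℕ, ENNReal.ofReal ((1 + ‖x + (j : ℝ) • z‖) ^ (-(q + 1))) := by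
    simpa using (Finset.sum_le_sum hterm).trans (ENNReal.sum_le_tsum _)
  refine le_trans ?_ (mul_le_mul_right hsum _)
  rw [← ENNReal.ofReal_natCast, ← ENNReal.ofReal_mul (by positivity),
    ← ENNReal.ofReal_mul (by positivity)]
  refine ENNReal.ofReal_le_ofReal ?_
  calc (1 + ‖x‖) ^ (-q) = (1 + ‖x‖) * (1 + ‖x‖) ^ (-(q + 1)) := by
        rw [← Real.rpow_one_add' ha.le (by linarith)]
        ring_nf
    _ = ‖z‖ * 2 ^ (q + 1) * ((1 + ‖x‖) / ‖z‖ * (2 * (1 + ‖x‖)) ^ (-(q + 1))) := by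
        rw [Real.mul_rpow two_pos.le ha.le, Real.rpow_neg two_pos.le]
        field_simp
    _ ≤ _ := by gcongr; exact Nat.le_ceil _

lemma tsum_setLIntegral_comp_add_right_le {G : Type*} [AddGroup G] [MeasurableSpace G]
    [MeasurableAdd G] {μ : Measure G} [μ.IsAddRightInvariant] {ι : Type*} [Countable ι]
    {A : Set G} (hA : MeasurableSet A) {v : ι → G}
    (hdisj : Pairwise (Function.onFun Disjoint fun i => (· + v i) '' A)) (f : G → ℝ≥0∞) :
    ∑' i, ∫⁻ x in A, f (x + v i) ∂μ ≤ ∫⁻ x, f x ∂μ := by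
  have htranslate : ∀ i, ∫⁻ x in A, f (x + v i) ∂μ = ∫⁻ x in (· + v i) '' A, f x ∂μ := fun i =>
    (measurePreserving_add_right μ (v i)).setLIntegral_comp_emb
      (measurableEmbedding_addRight (v i)) f A
  simp only [htranslate]
  rw [← lintegral_iUnion
    (fun i => (measurableEmbedding_addRight (v i)).measurableSet_image.2 hA) hdisj]
  exact setLIntegral_le_lintegral _ _

end Tail

section Translate

variable {n : ℕ} {C : Set (En n)} {q : ℝ} {Θ : En n → ℝ} {z : En n}

lemma mem_vadd_iff_sub_mem {x : En n} : x ∈ z +ᵥ C ↔ x - z ∈ C := by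
  rw [mem_vadd_set_iff_neg_vadd_mem, vadd_eq_add, neg_add_eq_sub]

lemma IsGoodCone.pairwise_disjoint_image_diff_vadd (hC : IsGoodCone n C) (hz : z ∈ C) :
    Pairwise (Function.onFun Disjoint fun j : ℕ => (· + (j : ℝ) • z) '' (C \ (z +ᵥ C))) := by
  refine (pairwise_disjoint_on _).2 fun i j hij => disjoint_left.2 ?_
  rintro _ ⟨x, ⟨-, hx⟩, rfl⟩ ⟨y, ⟨hy, -⟩, hxy : y + (j : ℝ) • z = x + (i : ℝ) • z⟩
  have hij' : (i : ℝ) + 1 ≤ j := mod_cast hij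
  refine hx (mem_vadd_iff_sub_mem.2 ?_)
  have hshift : x - z = y + ((j : ℝ) - (i + 1)) • z :=
    calc x - z = x + (i : ℝ) • z - ((i : ℝ) + 1) • z := by module
      _ = _ := by rw [← hxy]; module
  exact hshift ▸ hC.add_mem hy (hC.smul_mem hz (by linarith))

lemma IsGoodCone.setLIntegral_diff_vadd_lt_top (hC : IsGoodCone n C) (hz : z ∈ C) (hz0 : z ≠ 0)
    (hq0 : 0 < q) (hq : n - 1 < q) :
    ∫⁻ x in C \ (z +ᵥ C), ENNReal.ofReal ((1 + ‖x‖) ^ (-q)) < ∞ := by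
  have hmeas : MeasurableSet (C \ (z +ᵥ C)) :=
    hC.isClosed.measurableSet.diff (hC.isClosed.vadd z).measurableSet
  refine (lintegral_mono fun x => ofReal_rpow_neg_le_tsum hq0 hz0 x).trans_lt ?_
  rw [lintegral_const_mul _ (by fun_prop), lintegral_tsum (fun j => by fun_prop)]
  refine ENNReal.mul_lt_top ENNReal.ofReal_lt_top ?_
  refine (tsum_setLIntegral_comp_add_right_le hmeas (hC.pairwise_disjoint_image_diff_vadd hz)
    fun x => ENNReal.ofReal ((1 + ‖x‖) ^ (-(q + 1)))).trans_lt ?_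
  refine finite_integral_one_add_norm ?_
  rw [finrank_euclideanSpace_fin]
  linarith

theorem coneMeasure_compl_vadd_lt_top [NeZero n] (hC : IsGoodCone n C)
    (hΘ : IsThetaWeight n C q Θ) (hq1 : n - 1 < q) (hq2 : q < n) (hz : z ∈ interior C) :
    coneMeasure n C Θ (z +ᵥ C)ᶜ < ∞ := by
  have hq0 : 0 < q := (sub_nonneg.2 (Nat.one_le_cast.2 NeZero.one_le)).trans_lt hq1
  obtain ⟨M, hM⟩ := exists_coneDensity_le hC hΘ
  set D := C \ (z +ᵥ C)
  have hcov : (z +ᵥ C)ᶜ ∩ interior C ⊆ Metric.ball 0 1 ∪ (D ∩ {x | 1 ≤ ‖x‖}) := by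
    rintro x ⟨hx, hxC⟩
    rcases lt_or_ge ‖x‖ 1 with h | h
    · exact Or.inl (mem_ball_zero_iff.2 h)
    · exact Or.inr ⟨⟨interior_subset hxC, hx⟩, h⟩
  have hmeas : MeasurableSet (D ∩ {x | 1 ≤ ‖x‖}) :=
    (hC.isClosed.measurableSet.diff (hC.isClosed.vadd z).measurableSet).inter
      (measurableSet_le measurable_const measurable_norm)
  have htail : coneMeasure n C Θ (D ∩ {x | 1 ≤ ‖x‖}) < ∞ := by
    rw [coneMeasure_eq_withDensity, withDensity_apply _ hmeas]
    calc ∫⁻ x in D ∩ {x | 1 ≤ ‖x‖}, coneDensity n C Θ x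
        ≤ ∫⁻ x in D ∩ {x | 1 ≤ ‖x‖},
            M * ENNReal.ofReal (2 ^ q) * ENNReal.ofReal ((1 + ‖x‖) ^ (-q)) := by
          refine setLIntegral_mono (by fun_prop) fun x hx => ?_
          refine (hM x (norm_pos_iff.1 (one_pos.trans_le hx.2))).trans ?_
          rw [mul_assoc, ← ENNReal.ofReal_mul (by positivity)]
          gcongr
          exact rpow_neg_le_two_rpow_mul_one_add_rpow_neg hq0.le hx.2
      _ ≤ ∫⁻ x in D, M * ENNReal.ofReal (2 ^ q) * ENNReal.ofReal ((1 + ‖x‖) ^ (-q)) :=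
          lintegral_mono_set inter_subset_left
      _ < ∞ := by
          rw [lintegral_const_mul _ (by fun_prop)]
          exact ENNReal.mul_lt_top (ENNReal.mul_lt_top ENNReal.coe_lt_top ENNReal.ofReal_lt_top)
            (hC.setLIntegral_diff_vadd_lt_top (interior_subset hz)
              (hC.ne_zero_of_mem_interior hz) hq0 hq1)
  calc coneMeasure n C Θ (z +ᵥ C)ᶜ = coneMeasure n C Θ ((z +ᵥ C)ᶜ ∩ interior C) :=
        (measure_inter_conull (ae_restrict_mem isOpen_interior.measurableSet)).symm
    _ ≤ _ := (measure_mono hcov).trans (measure_union_le _ _)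
    _ < ∞ := ENNReal.add_lt_top.2 ⟨coneMeasure_ball_lt_top hC hΘ hq2, htail⟩

end Translate

/-- The `a`-th power of the radial function of the Wulff shape of `H` in the direction of `x`. For
`a = n - q` it is the density of the covolume with respect to the weighted measure on the unit
ball. -/
def radialDensity (n : ℕ) (C : Set (En n)) (a : ℝ) (H : En n → ℝ) (x : En n) : ℝ :=
  (‖x‖ * wulffRadial n C H x) ^ a

namespace IsAdmissible

variable {n : ℕ} {C : Set (En n)} {H H' : En n → ℝ} {a c : ℝ}

lemma const_mul (hH : IsAdmissible n C H) (hc : 0 < c) : IsAdmissible n C fun u => c * H u where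
  nonneg u hu := mul_nonneg hc.le (hH.nonneg u hu)
  bddAbove := hH.bddAbove.elim fun R hR =>
    ⟨c * R, fun u hu => mul_le_mul_of_nonneg_left (hR u hu) hc.le⟩
  exists_pos := hH.exists_pos.imp fun _ hu => ⟨hu.1, mul_pos hc hu.2⟩

lemma wulffRadial_le_mul (hH : IsAdmissible n C H) (hH' : IsAdmissible n C H')
    (hC : IsGoodCone n C) (hc : 0 ≤ c) (h : ∀ u ∈ dualSphere n C, H' u ≤ c * H u) (x : En n) :
    wulffRadial n C H' x ≤ c * wulffRadial n C H x := by
  by_cases hx : x ∈ interior C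
  · refine hH'.wulffRadial_le hC hx fun u hu => (h u hu).trans ?_
    rw [mul_assoc]
    gcongr
    exact hH.le_wulffRadial_mul hC hx hu
  · simp only [wulffRadial_of_notMem hx, mul_zero, le_refl]

lemma wulffRadial_const_mul (hH : IsAdmissible n C H) (hC : IsGoodCone n C) (hc : 0 < c)
    (x : En n) : wulffRadial n C (fun u => c * H u) x = c * wulffRadial n C H x := by
  refine le_antisymm (hH.wulffRadial_le_mul (hH.const_mul hc) hC hc.le (fun _ _ => le_rfl) x) ?_
  rw [← le_inv_mul_iff₀ hc]
  refine (hH.const_mul hc).wulffRadial_le_mul hH hC (inv_pos.2 hc).le (fun u _ => ?_) x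
  rw [inv_mul_cancel_left₀ hc.ne']

lemma measurable_radialDensity (hH : IsAdmissible n C H) (hC : IsGoodCone n C) :
    Measurable (radialDensity n C a H) :=
  (measurable_norm.mul (hH.measurable_wulffRadial hC)).pow_const a

lemma radialDensity_nonneg (hH : IsAdmissible n C H) (hC : IsGoodCone n C) (x : En n) :
    0 ≤ radialDensity n C a H x :=
  Real.rpow_nonneg (mul_nonneg (norm_nonneg x) (hH.wulffRadial_nonneg hC x)) a

lemma radialDensity_const_mul (hH : IsAdmissible n C H) (hC : IsGoodCone n C) (hc : 0 < c)
    (x : En n) : radialDensity n C a (fun u => c * H u) x = c ^ a * radialDensity n C a H x := by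
  rw [radialDensity, radialDensity, hH.wulffRadial_const_mul hC hc, mul_left_comm,
    Real.mul_rpow hc.le (mul_nonneg (norm_nonneg x) (hH.wulffRadial_nonneg hC x))]

lemma ball_subset_compl_wulff {u : En n} (hu : u ∈ dualSphere n C) :
    Metric.ball 0 (H u) ⊆ (wulff n C (dualSphere n C) H)ᶜ := fun x hx hxW =>
  (mem_ball_zero_iff.1 hx).not_ge (((mem_wulff_iff.1 hxW).2 u hu).trans (neg_inner_le_norm x hu))

end IsAdmissible

namespace IsConeMeasure

variable {n : ℕ} {C : Set (En n)} {a : ℝ} {μ : Measure (En n)} {H : En n → ℝ}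

lemma measure_ball (hμ : IsConeMeasure n C a μ) {R : ℝ} (hR : 0 ≤ R) :
    μ (Metric.ball 0 R) = ENNReal.ofReal (R ^ a) * μ (Metric.ball 0 1) := by
  have hball : Metric.ball (0 : En n) R = {x | ‖x‖ < R} := by ext; simp
  rw [hball, hμ.polar (fun _ => R) measurable_const (fun _ => hR) fun _ _ _ => rfl,
    setLIntegral_const]

lemma exists_lt_measure_ball (hμ : IsConeMeasure n C a μ) {m : ℝ≥0∞} (hm : m ≠ ∞) :
    ∃ R, m < μ (Metric.ball 0 R) := by
  have hlim : Tendsto (fun R : ℝ => ENNReal.ofReal (R ^ a) * μ (Metric.ball 0 1)) atTop (𝓝 ∞) := by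
    rw [← ENNReal.top_mul hμ.ball_pos.ne']
    exact ENNReal.Tendsto.mul_const (ENNReal.tendsto_ofReal_atTop.comp
      (tendsto_rpow_atTop hμ.degree_pos)) (Or.inl ENNReal.top_ne_zero)
  obtain ⟨R, hlt, hR⟩ := ((hlim.eventually_const_lt hm.lt_top).and (eventually_ge_atTop 0)).exists
  exact ⟨R, by rwa [hμ.measure_ball hR]⟩

lemma measure_inter_one_lt_wulffRadial [NeZero n] (hμ : IsConeMeasure n C a μ)
    (hC : IsGoodCone n C) (hH : IsAdmissible n C H) {A : Set (En n)} (hA : MeasurableSet A)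
    (hcone : ∀ r : ℝ, 0 < r → ∀ x, r • x ∈ A ↔ x ∈ A) :
    μ (A ∩ {x | 1 < wulffRadial n C H x}) =
      ∫⁻ x in A, ENNReal.ofReal (radialDensity n C a H x) ∂(μ.restrict (Metric.ball 0 1)) := by
  set τ : En n → ℝ := A.indicator fun x => ‖x‖ * wulffRadial n C H x
  have hτ : Measurable τ := (measurable_norm.mul (hH.measurable_wulffRadial hC)).indicator hA
  have hset : A ∩ {x | 1 < wulffRadial n C H x} = {x | ‖x‖ < τ x} := by
    ext x
    by_cases hxA : x ∈ A
    · rcases eq_or_ne x 0 with rfl | hx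
      · simp [τ, hxA, wulffRadial_of_notMem hC.zero_notMem_interior]
      · simp [τ, hxA, lt_mul_iff_one_lt_right (norm_pos_iff.2 hx)]
    · simp [τ, hxA, norm_nonneg x]
  rw [hset, hμ.polar τ hτ (indicator_nonneg fun x _ =>
      mul_nonneg (norm_nonneg x) (hH.wulffRadial_nonneg hC x)) fun r hr x => ?_,
    ← lintegral_indicator hA]
  · refine lintegral_congr fun x => ?_
    by_cases hxA : x ∈ A <;> simp [τ, hxA, radialDensity, Real.zero_rpow hμ.degree_pos.ne']
  · by_cases hxA : x ∈ A
    · simp only [τ, indicator_of_mem, hxA, (hcone r hr x).2 hxA]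
      rw [hH.wulffRadial_smul hC hr, norm_smul, Real.norm_of_nonneg hr.le]
      field_simp
    · simp only [τ, indicator_of_notMem hxA, indicator_of_notMem (mt (hcone r hr x).1 hxA)]

lemma measure_compl_wulff [NeZero n] (hμ : IsConeMeasure n C a μ) (hC : IsGoodCone n C)
    (hH : IsAdmissible n C H) :
    μ (wulff n C (dualSphere n C) H)ᶜ =
      ∫⁻ x in Metric.ball 0 1, ENNReal.ofReal (radialDensity n C a H x) ∂μ := by
  have hpolar := hμ.measure_inter_one_lt_wulffRadial hC hH MeasurableSet.univ (by simp)
  rw [setLIntegral_univ, univ_inter] at hpolar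
  rw [← hpolar]
  refine measure_congr ?_
  filter_upwards [hμ.ae_mem_interior] with x hx
  exact propext ((not_congr (hH.mem_wulff_iff_wulffRadial_le_one hC hx)).trans not_le)

lemma measure_compl_wulff_pos (hμ : IsConeMeasure n C a μ) (hH : IsAdmissible n C H) :
    0 < μ (wulff n C (dualSphere n C) H)ᶜ := by
  obtain ⟨u, hu, hpos⟩ := hH.exists_pos
  refine lt_of_lt_of_le ?_ (measure_mono (IsAdmissible.ball_subset_compl_wulff hu))
  rw [hμ.measure_ball hpos.le]
  exact ENNReal.mul_pos (ENNReal.ofReal_pos.2 (Real.rpow_pos_of_pos hpos a)).ne' hμ.ball_pos.ne'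

lemma measure_compl_wulff_const_mul [NeZero n] (hμ : IsConeMeasure n C a μ) (hC : IsGoodCone n C)
    (hH : IsAdmissible n C H) {c : ℝ} (hc : 0 < c) :
    μ (wulff n C (dualSphere n C) fun u => c * H u)ᶜ =
      ENNReal.ofReal (c ^ a) * μ (wulff n C (dualSphere n C) H)ᶜ := by
  rw [hμ.measure_compl_wulff hC hH, hμ.measure_compl_wulff hC (hH.const_mul hc),
    ← lintegral_const_mul _ (hH.measurable_radialDensity hC).ennreal_ofReal]
  refine lintegral_congr fun x => ?_
  rw [hH.radialDensity_const_mul hC hc, ENNReal.ofReal_mul (Real.rpow_nonneg hc.le a)]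

lemma measure_compl_wulff_rpow_mul [NeZero n] (hμ : IsConeMeasure n C a μ) (hC : IsGoodCone n C)
    (hH : IsAdmissible n C H) (hfin : μ (wulff n C (dualSphere n C) H)ᶜ ≠ ∞) {m : ℝ}
    (hm : 0 < m) :
    μ (wulff n C (dualSphere n C) fun u =>
      (m / μ.real (wulff n C (dualSphere n C) H)ᶜ) ^ a⁻¹ * H u)ᶜ = ENNReal.ofReal m := by
  have hV : 0 < μ.real (wulff n C (dualSphere n C) H)ᶜ :=
    ENNReal.toReal_pos (hμ.measure_compl_wulff_pos hH).ne' hfin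
  rw [hμ.measure_compl_wulff_const_mul hC hH (Real.rpow_pos_of_pos (div_pos hm hV) _),
    Real.rpow_inv_rpow (div_pos hm hV).le hμ.degree_pos.ne', ← ofReal_measureReal hfin,
    ← ENNReal.ofReal_mul (div_pos hm hV).le, div_mul_cancel₀ _ hV.ne']

end IsConeMeasure

/-- The Gauss map of the Wulff shape of `H` in radial parametrisation: the outer unit normal at the
boundary point in the direction of `x`. It is read off from the gradient of the reciprocal radial
function, which is concave; where that function is not differentiable the value is junk. -/
def wulffGauss (n : ℕ) (C : Set (En n)) (H : En n → ℝ) (x : En n) : En n :=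
  -(‖gradient (wulffRadial n C H)⁻¹ x‖⁻¹ • gradient (wulffRadial n C H)⁻¹ x)

lemma measurable_wulffGauss {n : ℕ} {C : Set (En n)} {H : En n → ℝ} :
    Measurable (wulffGauss n C H) := by
  have hgrad : Measurable (gradient (wulffRadial n C H)⁻¹) :=
    (InnerProductSpace.toDual ℝ (En n)).symm.continuous.measurable.comp (measurable_fderiv ℝ _)
  unfold wulffGauss
  fun_prop

lemma ae_differentiableAt_of_concaveOn {E : Type*} [NormedAddCommGroup E] [NormedSpace ℝ E]
    [FiniteDimensional ℝ E] [MeasurableSpace E] [BorelSpace E] (μ : Measure E) [μ.IsAddHaarMeasure]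
    {U : Set E} {f : E → ℝ} (hU : IsOpen U) (hf : ConcaveOn ℝ U f) :
    ∀ᵐ x ∂μ, x ∈ U → DifferentiableAt ℝ f x := by
  have hnull : μ {x | ¬(x ∈ U → DifferentiableAt ℝ f x)} = 0 := by
    refine measure_null_of_locally_null _ fun x hx => ?_
    obtain ⟨L, t, ht, hLip⟩ := hf.locallyLipschitzOn hU (Classical.not_imp.1 hx).1
    rw [hU.nhdsWithin_eq (Classical.not_imp.1 hx).1] at ht
    obtain ⟨o, hot, ho, hxo⟩ := mem_nhds_iff.1 ht
    refine ⟨_ ∩ o, inter_mem_nhdsWithin _ (ho.mem_nhds hxo), ?_⟩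
    refine measure_mono_null ?_ ((hLip.mono hot).ae_differentiableWithinAt_of_mem (μ := μ))
    rintro y ⟨hy, hyo⟩ hdiff
    exact hy fun _ => (hdiff hyo).differentiableAt (ho.mem_nhds hyo)
  exact hnull

namespace IsAdmissible

variable {n : ℕ} {C : Set (En n)} {H : En n → ℝ} {x u : En n}

lemma exists_lt_wulffRadial_forall_le (hH : IsAdmissible n C H) (hC : IsGoodCone n C)
    (husc : UpperSemicontinuous H) (hx : x ∈ interior C) {S : Set (En n)}
    (hS : S ⊆ dualSphere n C) (hSc : IsClosed S)
    (hne : ∀ u ∈ S, H u ≠ wulffRadial n C H x * -⟪x, u⟫) :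
    ∃ r < wulffRadial n C H x, ∀ u ∈ S, H u ≤ r * -⟪x, u⟫ := by
  rcases S.eq_empty_or_nonempty with rfl | hSne
  · exact ⟨0, hH.wulffRadial_pos hC hx, by simp⟩
  have hgap : UpperSemicontinuousOn (fun u => H u + -(wulffRadial n C H x * -⟪x, u⟫)) S :=
    (husc.add (Continuous.upperSemicontinuous (by fun_prop))).upperSemicontinuousOn S
  obtain ⟨v, hv, hmax⟩ :=
    hgap.exists_isMaxOn hSne ((isCompact_dualSphere C).of_isClosed_subset hSc hS)
  have hx0 : 0 < ‖x‖ := (neg_inner_pos hx (hS hv)).trans_le (neg_inner_le_norm x (hS hv))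
  set η := wulffRadial n C H x * -⟪x, v⟫ - H v with hη
  have hη0 : 0 < η :=
    sub_pos.2 (lt_of_le_of_ne (hH.le_wulffRadial_mul hC hx (hS hv)) (hne v hv))
  refine ⟨wulffRadial n C H x - η / ‖x‖, sub_lt_self _ (div_pos hη0 hx0), fun u hu => ?_⟩
  have hu_gap : H u + -(wulffRadial n C H x * -⟪x, u⟫) ≤ -η := by
    rw [hη, neg_sub, sub_eq_add_neg]; exact hmax hu
  have hη_le : η / ‖x‖ * -⟪x, u⟫ ≤ η := by
    rw [div_mul_eq_mul_div, div_le_iff₀ hx0]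
    exact mul_le_mul_of_nonneg_left (neg_inner_le_norm x (hS hu)) hη0.le
  linarith [sub_mul (wulffRadial n C H x) (η / ‖x‖) (-⟪x, u⟫)]

lemma exists_eq_wulffRadial_mul (hH : IsAdmissible n C H) (hC : IsGoodCone n C)
    (husc : UpperSemicontinuous H) (hx : x ∈ interior C) :
    ∃ u ∈ dualSphere n C, H u = wulffRadial n C H x * -⟪x, u⟫ := by
  by_contra! hne
  obtain ⟨r, hr, hle⟩ := hH.exists_lt_wulffRadial_forall_le hC husc hx Subset.rfl
    (isCompact_dualSphere C).isClosed hne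
  exact hr.not_ge (hH.wulffRadial_le hC hx hle)

lemma concaveOn_inv_wulffRadial (hH : IsAdmissible n C H) (hC : IsGoodCone n C) :
    ConcaveOn ℝ (interior C) (wulffRadial n C H)⁻¹ := by
  have hmul_le {x u : En n} (hx : x ∈ interior C) (hu : u ∈ dualSphere n C) :
      (wulffRadial n C H x)⁻¹ * H u ≤ -⟪x, u⟫ :=
    (inv_mul_le_iff₀ (hH.wulffRadial_pos hC hx)).2 (hH.le_wulffRadial_mul hC hx hu)
  refine ⟨hC.convex.interior, fun x hx y hy a b ha hb hab => ?_⟩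
  have hxy := hC.convex.interior hx hy ha hb hab
  have hpos : 0 < a * (wulffRadial n C H x)⁻¹ + b * (wulffRadial n C H y)⁻¹ :=
    convex_Ioi (0 : ℝ) (inv_pos.2 (hH.wulffRadial_pos hC hx))
      (inv_pos.2 (hH.wulffRadial_pos hC hy)) ha hb hab
  simp only [Pi.inv_apply, smul_eq_mul]
  rw [le_inv_comm₀ hpos (hH.wulffRadial_pos hC hxy)]
  refine hH.wulffRadial_le hC hxy fun u hu => ?_
  rw [le_inv_mul_iff₀ hpos]
  calc (a * (wulffRadial n C H x)⁻¹ + b * (wulffRadial n C H y)⁻¹) * H u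
      = a * ((wulffRadial n C H x)⁻¹ * H u) + b * ((wulffRadial n C H y)⁻¹ * H u) := by ring
    _ ≤ a * -⟪x, u⟫ + b * -⟪y, u⟫ := by gcongr <;> exact hmul_le ‹_› hu
    _ = -⟪a • x + b • y, u⟫ := by
      rw [inner_add_left, real_inner_smul_left, real_inner_smul_left]; ring

lemma wulffGauss_smul (hH : IsAdmissible n C H) (hC : IsGoodCone n C) {r : ℝ} (hr : 0 < r)
    (x : En n) : wulffGauss n C H (r • x) = wulffGauss n C H x := by
  have hhom : (fun y => (wulffRadial n C H)⁻¹ (r • y)) = r • (wulffRadial n C H)⁻¹ := by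
    ext y
    simp [hH.wulffRadial_smul hC hr, mul_comm]
  have hfderiv := fderiv_comp_smul (𝕜 := ℝ) (f := (wulffRadial n C H)⁻¹) (x := x) r
  rw [hhom, fderiv_const_smul_field] at hfderiv
  simp only [wulffGauss, gradient, smul_right_injective _ hr.ne' hfderiv]

/-- If `H u = ρ(x)(-⟪x, u⟫)`, the concave function `ρ⁻¹` has the linear majorant
`y ↦ -⟪y, u⟫ / H u` touching it at `x`, so its gradient there is a negative multiple of `u`. -/
lemma wulffGauss_eq_of_eq (hH : IsAdmissible n C H) (hC : IsGoodCone n C) (hx : x ∈ interior C)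
    (hdiff : DifferentiableAt ℝ (wulffRadial n C H)⁻¹ x) (hu : u ∈ dualSphere n C)
    (heq : H u = wulffRadial n C H x * -⟪x, u⟫) : wulffGauss n C H x = u := by
  have hHu : 0 < H u := heq ▸ mul_pos (hH.wulffRadial_pos hC hx) (neg_inner_pos hx hu)
  have htouch : -(H u)⁻¹ * ⟪u, x⟫ = (wulffRadial n C H x)⁻¹ := by
    have := (neg_inner_pos hx hu).ne'
    rw [neg_mul_comm, real_inner_comm, heq, mul_inv, mul_assoc, inv_mul_cancel₀ this, mul_one]
  have hmin : IsLocalMin (fun y => -(H u)⁻¹ * ⟪u, y⟫ - (wulffRadial n C H)⁻¹ y) x := by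
    filter_upwards [isOpen_interior.mem_nhds hx] with y hy
    simp only [Pi.inv_apply]
    rw [htouch, sub_self, sub_nonneg, neg_mul_comm, real_inner_comm, le_inv_mul_iff₀ hHu,
      mul_inv_le_iff₀' (hH.wulffRadial_pos hC hy)]
    exact hH.le_wulffRadial_mul hC hy hu
  have hderiv : HasFDerivAt (fun y => -(H u)⁻¹ * ⟪u, y⟫ - (wulffRadial n C H)⁻¹ y)
      (-(H u)⁻¹ • innerSL ℝ u - fderiv ℝ (wulffRadial n C H)⁻¹ x) x :=
    (((innerSL ℝ u).hasFDerivAt).const_mul _).sub hdiff.hasFDerivAt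
  have hgrad : gradient (wulffRadial n C H)⁻¹ x = -(H u)⁻¹ • u := by
    rw [gradient, ← sub_eq_zero.1 (hmin.hasFDerivAt_eq_zero hderiv),
      LinearIsometryEquiv.symm_apply_eq]
    ext y
    simp
  rw [wulffGauss, hgrad, norm_smul, norm_of_mem_dualSphere hu, norm_neg, norm_inv,
    Real.norm_of_nonneg hHu.le, mul_one, inv_inv, smul_smul, mul_neg, mul_inv_cancel₀ hHu.ne',
    neg_smul, one_smul, neg_neg]

lemma ae_eq_wulffRadial_mul_iff (hH : IsAdmissible n C H) (hC : IsGoodCone n C)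
    (husc : UpperSemicontinuous H) : ∀ᵐ x : En n, x ∈ interior C →
      wulffGauss n C H x ∈ dualSphere n C ∧
        ∀ u ∈ dualSphere n C, H u = wulffRadial n C H x * -⟪x, u⟫ ↔ u = wulffGauss n C H x := by
  filter_upwards [ae_differentiableAt_of_concaveOn volume isOpen_interior
    (hH.concaveOn_inv_wulffRadial hC)] with x hdiff hx
  obtain ⟨u, hu, heq⟩ := hH.exists_eq_wulffRadial_mul hC husc hx
  have hgauss := hH.wulffGauss_eq_of_eq hC hx (hdiff hx) hu heq
  refine ⟨hgauss ▸ hu, fun v hv =>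
    ⟨fun h => (hH.wulffGauss_eq_of_eq hC hx (hdiff hx) hv h).symm, ?_⟩⟩
  rintro rfl
  rwa [hgauss]

end IsAdmissible

lemma exp_sub_one_le_mul_exp (y : ℝ) : Real.exp y - 1 ≤ y * Real.exp y := by
  have hinv : Real.exp (-y) * Real.exp y = 1 := by
    rw [← Real.exp_add, neg_add_cancel, Real.exp_zero]
  nlinarith [mul_le_mul_of_nonneg_right (Real.add_one_le_exp (-y)) (Real.exp_pos y).le]

lemma abs_sub_le_exp_sub_one_mul {s t y : ℝ} (hs : 0 ≤ s) (hst : s ≤ Real.exp y * t)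
    (hts : t ≤ Real.exp y * s) : |t - s| ≤ (Real.exp y - 1) * s := by
  rw [abs_le]
  constructor
  · have hcosh : 2 ≤ Real.exp y + Real.exp (-y) := by
      linarith [Real.one_le_cosh y, Real.cosh_eq y]
    have hle : Real.exp (-y) * s ≤ t := by
      rwa [Real.exp_neg, inv_mul_le_iff₀ (Real.exp_pos y)]
    nlinarith [mul_le_mul_of_nonneg_right hcosh hs]
  · linarith

/-- The perturbation of `h` whose logarithm is `log h + t g`. -/
def logPerturb {n : ℕ} (h g : En n → ℝ) (t : ℝ) (u : En n) : ℝ := Real.exp (t * g u) * h u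

section Perturb

open scoped BoundedContinuousFunction

variable {n : ℕ} {C : Set (En n)} {h : En n → ℝ} {a t : ℝ} {x : En n}

lemma logPerturb_zero (h g : En n → ℝ) : logPerturb h g 0 = h := by
  ext u
  simp [logPerturb]

namespace IsAdmissible

lemma logPerturb_le (hh : IsAdmissible n C h) (g : En n →ᵇ ℝ) (ht : 0 ≤ t) {u : En n}
    (hu : u ∈ dualSphere n C) : logPerturb h g t u ≤ Real.exp (t * ‖g‖) * h u := by
  have := hh.nonneg u hu
  unfold logPerturb
  gcongr
  exact (le_abs_self _).trans (g.norm_coe_le_norm u)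

lemma le_logPerturb (hh : IsAdmissible n C h) (g : En n →ᵇ ℝ) (ht : 0 ≤ t) {u : En n}
    (hu : u ∈ dualSphere n C) : h u ≤ Real.exp (t * ‖g‖) * logPerturb h g t u := by
  have hg : 0 ≤ ‖g‖ + g u := by linarith [neg_le_of_abs_le (g.norm_coe_le_norm u)]
  rw [logPerturb, ← mul_assoc, ← Real.exp_add, ← mul_add]
  exact le_mul_of_one_le_left (hh.nonneg u hu) (Real.one_le_exp (mul_nonneg ht hg))

lemma perturb (hh : IsAdmissible n C h) (g : En n →ᵇ ℝ) (ht : 0 ≤ t) :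
    IsAdmissible n C (logPerturb h g t) where
  nonneg u hu := mul_nonneg (Real.exp_pos _).le (hh.nonneg u hu)
  bddAbove := (hh.const_mul (Real.exp_pos (t * ‖g‖))).bddAbove.imp fun _ hR u hu =>
    (hh.logPerturb_le g ht hu).trans (hR u hu)
  exists_pos := hh.exists_pos.imp fun _ hu => ⟨hu.1, mul_pos (Real.exp_pos _) hu.2⟩

lemma exp_mul_wulffRadial_le (hh : IsAdmissible n C h) (hC : IsGoodCone n C) (g : En n →ᵇ ℝ)
    (ht : 0 ≤ t) (hx : x ∈ interior C) {v : En n} (hv : v ∈ dualSphere n C)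
    (heq : h v = wulffRadial n C h x * -⟪x, v⟫) :
    Real.exp (t * g v) * wulffRadial n C h x ≤ wulffRadial n C (logPerturb h g t) x := by
  have hle := (hh.perturb g ht).le_wulffRadial_mul hC hx hv
  rw [logPerturb, heq, ← mul_assoc] at hle
  exact le_of_mul_le_mul_right hle (neg_inner_pos hx hv)

/-- If `v` is the only contact direction at `x`, the contact directions of the perturbed Wulff
shape lie near `v` for small `t`, so only the values of `g` near `v` matter. -/
lemma eventually_wulffRadial_logPerturb_le (hh : IsAdmissible n C h) (hC : IsGoodCone n C)
    (husc : UpperSemicontinuous h) (g : En n →ᵇ ℝ) (hx : x ∈ interior C) {v : En n}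
    (huniq : ∀ u ∈ dualSphere n C, h u = wulffRadial n C h x * -⟪x, u⟫ → u = v) {b : ℝ}
    (hb : g v < b) :
    ∀ᶠ t in 𝓝[>] (0 : ℝ), wulffRadial n C (logPerturb h g t) x ≤
      Real.exp (t * b) * wulffRadial n C h x := by
  obtain ⟨r, hr, hfar⟩ := hh.exists_lt_wulffRadial_forall_le hC husc hx
    (S := dualSphere n C ∩ {u | b ≤ g u}) inter_subset_left
    ((isCompact_dualSphere C).isClosed.inter (isClosed_le continuous_const g.continuous))
    fun u hu heq => hb.not_ge (huniq u hu.1 heq ▸ hu.2)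
  have hlim : Tendsto (fun t : ℝ => Real.exp (t * ‖g‖) * r) (𝓝[>] 0) (𝓝 r) := by
    have hcont : Continuous fun t : ℝ => Real.exp (t * ‖g‖) * r := by fun_prop
    simpa using (hcont.tendsto 0).mono_left nhdsWithin_le_nhds
  have hlim' : Tendsto (fun t : ℝ => Real.exp (t * b) * wulffRadial n C h x) (𝓝[>] 0)
      (𝓝 (wulffRadial n C h x)) := by
    have hcont : Continuous fun t : ℝ => Real.exp (t * b) * wulffRadial n C h x := by fun_prop
    simpa using (hcont.tendsto 0).mono_left nhdsWithin_le_nhds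
  filter_upwards [hlim.eventually_lt hlim' hr, self_mem_nhdsWithin] with t hlt ht
  have ht0 : 0 ≤ t := le_of_lt ht
  refine (hh.perturb g ht0).wulffRadial_le hC hx fun u hu => ?_
  have hxu := neg_inner_pos hx hu
  rcases le_or_gt b (g u) with hbu | hbu
  · calc logPerturb h g t u ≤ Real.exp (t * ‖g‖) * (r * -⟪x, u⟫) :=
        (hh.logPerturb_le g ht0 hu).trans (by gcongr; exact hfar u ⟨hu, hbu⟩)
      _ ≤ _ := by rw [← mul_assoc]; gcongr
  · have := hh.nonneg u hu
    rw [logPerturb, mul_assoc]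
    gcongr
    exact hh.le_wulffRadial_mul hC hx hu

lemma hasDerivWithinAt_log_wulffRadial (hh : IsAdmissible n C h) (hC : IsGoodCone n C)
    (husc : UpperSemicontinuous h) (g : En n →ᵇ ℝ) (hx : x ∈ interior C) {v : En n}
    (huniq : ∀ u ∈ dualSphere n C, h u = wulffRadial n C h x * -⟪x, u⟫ ↔ u = v)
    (hv : v ∈ dualSphere n C) :
    HasDerivWithinAt (fun t => Real.log (wulffRadial n C (logPerturb h g t) x)) (g v)
      (Ioi 0) 0 := by
  have hρ := hh.wulffRadial_pos hC hx
  have hlog (c : ℝ) : Real.log (Real.exp c * wulffRadial n C h x) =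
      c + Real.log (wulffRadial n C h x) := by
    rw [Real.log_mul (Real.exp_pos c).ne' hρ.ne', Real.log_exp]
  rw [hasDerivWithinAt_iff_tendsto_slope' self_notMem_Ioi]
  have hslope (t : ℝ) : slope (fun t => Real.log (wulffRadial n C (logPerturb h g t) x)) 0 t
      = (Real.log (wulffRadial n C (logPerturb h g t) x) -
          Real.log (wulffRadial n C h x)) / t := by
    rw [slope_def_field, sub_zero, logPerturb_zero]
  simp only [funext hslope]
  refine tendsto_order.2 ⟨fun b hb => ?_, fun b hb => ?_⟩
  · filter_upwards [self_mem_nhdsWithin] with t (ht : 0 < t)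
    refine hb.trans_le ((le_div_iff₀' ht).2 (le_sub_iff_add_le.2 ?_))
    rw [← hlog]
    exact Real.log_le_log (mul_pos (Real.exp_pos _) hρ)
      (hh.exp_mul_wulffRadial_le hC g ht.le hx hv ((huniq v hv).2 rfl))
  · obtain ⟨c, hgc, hcb⟩ := exists_between hb
    filter_upwards [self_mem_nhdsWithin, hh.eventually_wulffRadial_logPerturb_le hC husc g hx
      (fun u hu => (huniq u hu).1) hgc] with t (ht : 0 < t) hle
    refine lt_of_le_of_lt ((div_le_iff₀' ht).2 (sub_le_iff_le_add.2 ?_)) hcb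
    rw [← hlog]
    exact Real.log_le_log ((hh.perturb g ht.le).wulffRadial_pos hC hx) hle

lemma hasDerivWithinAt_radialDensity (hh : IsAdmissible n C h) (hC : IsGoodCone n C)
    (husc : UpperSemicontinuous h) (g : En n →ᵇ ℝ) (hx : x ∈ interior C) {v : En n}
    (huniq : ∀ u ∈ dualSphere n C, h u = wulffRadial n C h x * -⟪x, u⟫ ↔ u = v)
    (hv : v ∈ dualSphere n C) :
    HasDerivWithinAt (fun t => radialDensity n C a (logPerturb h g t) x)
      (a * (g v * radialDensity n C a h x)) (Ioi 0) 0 := by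
  have hx0 : 0 < ‖x‖ := (neg_inner_pos hx hv).trans_le (neg_inner_le_norm x hv)
  have hexp {H : En n → ℝ} (hH : IsAdmissible n C H) :
      radialDensity n C a H x = ‖x‖ ^ a * Real.exp (Real.log (wulffRadial n C H x) * a) := by
    rw [radialDensity, Real.mul_rpow hx0.le (hH.wulffRadial_nonneg hC x),
      Real.rpow_def_of_pos (hH.wulffRadial_pos hC hx)]
  have hderiv := (((hh.hasDerivWithinAt_log_wulffRadial hC husc g hx huniq hv).mul_const a).exp
    ).const_mul (‖x‖ ^ a)
  rw [logPerturb_zero] at hderiv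
  have hval : a * (g v * radialDensity n C a h x) =
      ‖x‖ ^ a * (Real.exp (Real.log (wulffRadial n C h x) * a) * (g v * a)) := by
    rw [hexp hh]; ring
  rw [hval]
  exact hderiv.congr (fun t ht => hexp (hh.perturb g (le_of_lt ht))) (hexp (hh.perturb g le_rfl))

lemma radialDensity_le_mul {H H' : En n → ℝ} (hH : IsAdmissible n C H) (hH' : IsAdmissible n C H')
    (hC : IsGoodCone n C) (ha : 0 ≤ a) {c : ℝ} (hc : 0 < c)
    (h : ∀ u ∈ dualSphere n C, H' u ≤ c * H u) (x : En n) :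
    radialDensity n C a H' x ≤ c ^ a * radialDensity n C a H x := by
  rw [← hH.radialDensity_const_mul hC hc, radialDensity, radialDensity,
    hH.wulffRadial_const_mul hC hc]
  have := hH'.wulffRadial_nonneg hC x
  gcongr
  exact hH.wulffRadial_le_mul hH' hC hc.le h x

lemma abs_radialDensity_logPerturb_sub_le (hh : IsAdmissible n C h) (hC : IsGoodCone n C)
    (ha : 0 ≤ a) (g : En n →ᵇ ℝ) (ht : 0 ≤ t) (ht1 : t ≤ 1) (x : En n) :
    |radialDensity n C a (logPerturb h g t) x - radialDensity n C a h x| ≤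
      t * (‖g‖ * a * Real.exp (‖g‖ * a) * radialDensity n C a h x) := by
  have hT := hh.radialDensity_nonneg (a := a) hC x
  have hht := hh.perturb g ht
  have hpow : Real.exp (t * ‖g‖) ^ a = Real.exp (t * ‖g‖ * a) := (Real.exp_mul _ _).symm
  calc |radialDensity n C a (logPerturb h g t) x - radialDensity n C a h x|
      ≤ (Real.exp (t * ‖g‖ * a) - 1) * radialDensity n C a h x := by
        refine abs_sub_le_exp_sub_one_mul hT ?_ ?_ <;> rw [← hpow]
        · exact hht.radialDensity_le_mul hh hC ha (Real.exp_pos _)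
            (fun _ => hh.le_logPerturb g ht) x
        · exact hh.radialDensity_le_mul hht hC ha (Real.exp_pos _)
            (fun _ => hh.logPerturb_le g ht) x
    _ ≤ t * ‖g‖ * a * Real.exp (t * ‖g‖ * a) * radialDensity n C a h x := by
        gcongr; exact exp_sub_one_le_mul_exp _
    _ ≤ t * ‖g‖ * a * Real.exp (1 * ‖g‖ * a) * radialDensity n C a h x := by gcongr
    _ = _ := by ring_nf

end IsAdmissible

namespace IsConeMeasure

variable {μ : Measure (En n)}

lemma ae_eq_wulffRadial_mul_iff (hμ : IsConeMeasure n C a μ) (hC : IsGoodCone n C)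
    (hh : IsAdmissible n C h) (husc : UpperSemicontinuous h) :
    ∀ᵐ x ∂μ, x ∈ interior C ∧ wulffGauss n C h x ∈ dualSphere n C ∧
      ∀ u ∈ dualSphere n C, h u = wulffRadial n C h x * -⟪x, u⟫ ↔ u = wulffGauss n C h x := by
  filter_upwards [hμ.ae_mem_interior,
    hμ.absolutelyContinuous.ae_le (hh.ae_eq_wulffRadial_mul_iff hC husc)] with x hx hgauss
  exact ⟨hx, hgauss hx⟩

lemma measureReal_compl_wulff [NeZero n] (hμ : IsConeMeasure n C a μ) (hC : IsGoodCone n C)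
    {H : En n → ℝ} (hH : IsAdmissible n C H) :
    μ.real (wulff n C (dualSphere n C) H)ᶜ =
      ∫ x in Metric.ball 0 1, radialDensity n C a H x ∂μ := by
  rw [Measure.real, hμ.measure_compl_wulff hC hH, integral_eq_lintegral_of_nonneg_ae
    (Eventually.of_forall (hH.radialDensity_nonneg hC))
    (hH.measurable_radialDensity hC).aestronglyMeasurable]

lemma integrableOn_radialDensity [NeZero n] (hμ : IsConeMeasure n C a μ) (hC : IsGoodCone n C)
    {H : En n → ℝ} (hH : IsAdmissible n C H) (hfin : μ (wulff n C (dualSphere n C) H)ᶜ ≠ ∞) :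
    IntegrableOn (radialDensity n C a H) (Metric.ball 0 1) μ := by
  refine ⟨(hH.measurable_radialDensity hC).aestronglyMeasurable, ?_⟩
  rw [hasFiniteIntegral_iff_ofReal (Eventually.of_forall (hH.radialDensity_nonneg hC)),
    ← hμ.measure_compl_wulff hC hH]
  exact hfin.lt_top

lemma measure_compl_wulff_logPerturb_ne_top [NeZero n] (hμ : IsConeMeasure n C a μ)
    (hC : IsGoodCone n C) (hh : IsAdmissible n C h)
    (hfin : μ (wulff n C (dualSphere n C) h)ᶜ ≠ ∞) (g : En n →ᵇ ℝ) (ht : 0 ≤ t) :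
    μ (wulff n C (dualSphere n C) (logPerturb h g t))ᶜ ≠ ∞ := by
  refine ne_top_of_le_ne_top (b := ENNReal.ofReal (Real.exp (t * ‖g‖) ^ a) * _)
    (ENNReal.mul_ne_top ENNReal.ofReal_ne_top hfin) ?_
  rw [← hμ.measure_compl_wulff_const_mul hC hh (Real.exp_pos (t * ‖g‖))]
  refine measure_mono (compl_subset_compl.2 fun x hx => ?_)
  rw [mem_wulff_iff] at hx ⊢
  exact ⟨hx.1, fun u hu => (hh.logPerturb_le g ht hu).trans (hx.2 u hu)⟩

lemma hasDerivWithinAt_measureReal_compl_wulff [NeZero n] (hμ : IsConeMeasure n C a μ)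
    (hC : IsGoodCone n C) (hh : IsAdmissible n C h) (husc : UpperSemicontinuous h)
    (hfin : μ (wulff n C (dualSphere n C) h)ᶜ ≠ ∞) (g : En n →ᵇ ℝ) :
    HasDerivWithinAt (fun t => μ.real (wulff n C (dualSphere n C) (logPerturb h g t))ᶜ)
      (a * ∫ x in Metric.ball 0 1, g (wulffGauss n C h x) * radialDensity n C a h x ∂μ)
      (Ioi 0) 0 := by
  have hint := hμ.integrableOn_radialDensity hC hh hfin
  have hintt {t : ℝ} (ht : 0 ≤ t) := hμ.integrableOn_radialDensity hC (hh.perturb g ht)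
    (hμ.measure_compl_wulff_logPerturb_ne_top hC hh hfin g ht)
  rw [hasDerivWithinAt_iff_tendsto_slope' self_notMem_Ioi, ← integral_const_mul]
  have hlim : Tendsto (fun t => ∫ x in Metric.ball 0 1,
      slope (fun t => radialDensity n C a (logPerturb h g t) x) 0 t ∂μ) (𝓝[>] 0)
      (𝓝 (∫ x in Metric.ball 0 1, a * (g (wulffGauss n C h x) * radialDensity n C a h x) ∂μ)) := by
    refine tendsto_integral_filter_of_dominated_convergence
      (fun x => ‖g‖ * a * Real.exp (‖g‖ * a) * radialDensity n C a h x) ?_ ?_ (hint.const_mul _) ?_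
    · filter_upwards [self_mem_nhdsWithin] with t (ht : 0 < t)
      simp only [slope_def_field, logPerturb_zero]
      exact (((hh.perturb g ht.le).measurable_radialDensity hC).sub
        (hh.measurable_radialDensity hC) |>.div_const _).aestronglyMeasurable
    · filter_upwards [Ioc_mem_nhdsGT one_pos] with t ht
      refine Eventually.of_forall fun x => ?_
      rw [slope_def_field, sub_zero, logPerturb_zero, norm_div, Real.norm_eq_abs,
        Real.norm_of_nonneg ht.1.le, div_le_iff₀' ht.1]
      exact hh.abs_radialDensity_logPerturb_sub_le hC hμ.degree_pos.le g ht.1.le ht.2 x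
    · filter_upwards [ae_restrict_of_ae (hμ.ae_eq_wulffRadial_mul_iff hC hh husc)]
        with x ⟨hx, hv, huniq⟩
      exact (hasDerivWithinAt_iff_tendsto_slope' self_notMem_Ioi).1
        (hh.hasDerivWithinAt_radialDensity hC husc g hx huniq hv)
  refine hlim.congr' ?_
  filter_upwards [self_mem_nhdsWithin] with t (ht : 0 < t)
  simp only [slope_def_field, sub_zero, logPerturb_zero]
  rw [integral_div, integral_sub (hintt ht.le) hint, hμ.measureReal_compl_wulff hC hh,
    hμ.measureReal_compl_wulff hC (hh.perturb g ht.le)]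

end IsConeMeasure

end Perturb

section Kuratowski

lemma exists_strictMono_forall_tendsto_of_lipschitzWith {X Y : Type*} [PseudoMetricSpace X]
    [TopologicalSpace.SeparableSpace X] [Nonempty X] [MetricSpace Y] [ProperSpace Y]
    {L : ℝ≥0} {f : ℕ → X → Y} (hf : ∀ j, LipschitzWith L (f j))
    (hbdd : ∀ x, Bornology.IsBounded (range fun j => f j x)) :
    ∃ σ : ℕ → ℕ, StrictMono σ ∧ ∀ x, ∃ y, Tendsto (fun j => f (σ j) x) atTop (𝓝 y) := by
  let p : ℕ → X := TopologicalSpace.denseSeq X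
  obtain ⟨g, -, σ, hσ, hg⟩ := (isCompact_univ_pi fun i =>
    (hbdd (p i)).isCompact_closure).isSeqCompact (x := fun j i => f j (p i))
    fun j i _ => subset_closure ⟨j, rfl⟩
  refine ⟨σ, hσ, fun x => cauchySeq_tendsto_of_complete (Metric.cauchySeq_iff'.2 fun ε hε => ?_)⟩
  obtain ⟨i, hi⟩ := (TopologicalSpace.denseRange_denseSeq X).exists_dist_lt x
    (ε := ε / (3 * (L + 1))) (by positivity)
  have hnear (k : ℕ) : dist (f k x) (f k (p i)) < ε / 3 := by
    have : (0 : ℝ) < L + 1 := by positivity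
    calc dist (f k x) (f k (p i)) ≤ L * dist x (p i) := (hf k).dist_le_mul x (p i)
      _ ≤ (L + 1) * dist x (p i) := by gcongr; linarith
      _ < (L + 1) * (ε / (3 * (L + 1))) := by gcongr
      _ = ε / 3 := by field_simp
  obtain ⟨N, hN⟩ := Metric.cauchySeq_iff'.1 (tendsto_pi_nhds.1 hg i).cauchySeq (ε / 3)
    (by positivity)
  refine ⟨N, fun j hj => (dist_triangle4 _ (f (σ j) (p i)) (f (σ N) (p i)) _).trans_lt ?_⟩
  have hjN : dist (f (σ j) (p i)) (f (σ N) (p i)) < ε / 3 := hN j hj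
  linarith [hnear (σ j), hnear (σ N), dist_comm (f (σ N) x) (f (σ N) (p i))]

/-- Compactness of the space of closed sets for Kuratowski convergence. -/
lemma exists_strictMono_tendsto_infDist {X : Type*} [MetricSpace X] [ProperSpace X]
    {K : ℕ → Set X} {B : Set X} (hB : Bornology.IsBounded B) (hne : ∀ j, (K j ∩ B).Nonempty) :
    ∃ σ : ℕ → ℕ, StrictMono σ ∧ ∃ L : Set X, L.Nonempty ∧
      (∀ x ∉ L, ∀ᶠ j in atTop, x ∉ K (σ j)) ∧
      ∀ x ∈ L, Tendsto (fun j => Metric.infDist x (K (σ j))) atTop (𝓝 0) := by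
  choose y hyK hyB using hne
  have : Nonempty X := ⟨y 0⟩
  obtain ⟨σ, hσ, hlim⟩ := exists_strictMono_forall_tendsto_of_lipschitzWith
    (f := fun j x => Metric.infDist x (K j))
    (fun j => Metric.lipschitz_infDist_pt (K j)) fun x => by
      obtain ⟨r, hr⟩ := hB.subset_closedBall x
      refine (Metric.isBounded_Icc 0 r).subset ?_
      rintro _ ⟨j, rfl⟩
      exact ⟨Metric.infDist_nonneg,
        (Metric.infDist_le_dist_of_mem (hyK j)).trans (Metric.mem_closedBall'.1 (hr (hyB j)))⟩
  refine ⟨σ, hσ, {x | Tendsto (fun j => Metric.infDist x (K (σ j))) atTop (𝓝 0)}, ?_, ?_,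
    fun x hx => hx⟩
  · obtain ⟨x, -, τ, hτ, hx⟩ := tendsto_subseq_of_bounded hB fun j => hyB (σ j)
    obtain ⟨l, hl⟩ := hlim x
    have hzero : Tendsto (fun j => Metric.infDist x (K (σ (τ j)))) atTop (𝓝 0) :=
      squeeze_zero (fun _ => Metric.infDist_nonneg)
        (fun j => Metric.infDist_le_dist_of_mem (hyK (σ (τ j))))
        (by simpa using (tendsto_const_nhds (x := x)).dist hx)
    exact ⟨x, tendsto_nhds_unique (hl.comp hτ.tendsto_atTop) hzero ▸ hl⟩
  · intro x hx
    obtain ⟨l, hl⟩ := hlim x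
    have hl0 : 0 < l := (ge_of_tendsto' hl fun _ => Metric.infDist_nonneg).lt_of_ne
      fun h => hx (h ▸ hl)
    filter_upwards [hl.eventually_const_lt hl0] with j hj hmem
    exact hj.ne' (Metric.infDist_zero_of_mem hmem)

end Kuratowski

open Classical in
/-- The cost `log R - log t` of the value `t`, infinite for `t ≤ 0`. It is nonnegative on the range
`t ≤ R` of interest. -/
def logCost (R t : ℝ) : ℝ≥0∞ := if t ≤ 0 then ∞ else ENNReal.ofReal (Real.log R - Real.log t)

lemma logCost_of_pos {R t : ℝ} (ht : 0 < t) :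
    logCost R t = ENNReal.ofReal (Real.log R - Real.log t) := if_neg ht.not_ge

lemma logCost_of_nonpos {R t : ℝ} (ht : t ≤ 0) : logCost R t = ∞ := if_pos ht

lemma lt_logCost_iff {R : ℝ} (hR : 0 < R) {c : ℝ≥0∞} (hc : c ≠ ∞) (t : ℝ) :
    c < logCost R t ↔ t < R * Real.exp (-c.toReal) := by
  rcases le_or_gt t 0 with ht | ht
  · simp only [logCost_of_nonpos ht, hc.lt_top, true_iff]
    exact ht.trans_lt (by positivity)
  · rw [logCost_of_pos ht, ENNReal.lt_ofReal_iff_toReal_lt hc, lt_sub_comm,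
      Real.log_lt_iff_lt_exp ht, sub_eq_add_neg, Real.exp_add, Real.exp_log hR]

lemma antitone_logCost {R : ℝ} (hR : 0 < R) : Antitone (logCost R) := fun s t hst =>
  le_of_forall_lt fun c hc => by
    have hc' : c ≠ ∞ := hc.ne_top
    rw [lt_logCost_iff hR hc'] at hc ⊢
    exact hst.trans_lt hc

section Energy

variable {n : ℕ} {C K : Set (En n)} {μ φ : Measure (En n)} {R : ℝ} {m : ℝ≥0∞}

/-- The nonempty sets `K ⊆ C` of covolume at most `m` with respect to `μ`. No convexity is asked
for, since only the function `absSuppFn K` enters the variational problem. -/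
def competitors (n : ℕ) (C : Set (En n)) (μ : Measure (En n)) (m : ℝ≥0∞) : Set (Set (En n)) :=
  {K | K.Nonempty ∧ K ⊆ C ∧ μ Kᶜ ≤ m}

/-- The energy `∫ (log R - log h) dφ` of `h = absSuppFn K`, with `-log 0 = ∞`. Minimising it amounts
to maximising `∫ log h dφ`. -/
def logEnergy (φ : Measure (En n)) (R : ℝ) (K : Set (En n)) : ℝ≥0∞ :=
  ∫⁻ u, logCost R (absSuppFn K u) ∂φ

lemma measurable_logCost_absSuppFn (hR : 0 < R) (K : Set (En n)) :
    Measurable fun u => logCost R (absSuppFn K u) :=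
  (antitone_logCost hR).measurable.comp (upperSemicontinuous_absSuppFn K).measurable

lemma inter_ball_nonempty_of_mem_competitors (hR : m < μ (Metric.ball 0 R))
    (hK : K ∈ competitors n C μ m) : (K ∩ Metric.ball 0 R).Nonempty := by
  by_contra hcon
  have hsub : Metric.ball 0 R ⊆ Kᶜ := fun x hx hxK => hcon ⟨x, hxK, hx⟩
  exact ((measure_mono hsub).trans hK.2.2).not_gt hR

lemma absSuppFn_le_of_mem_competitors (hR : m < μ (Metric.ball 0 R))
    (hK : K ∈ competitors n C μ m) {u : En n} (hu : u ∈ dualSphere n C) : absSuppFn K u ≤ R := by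
  obtain ⟨y, hy, hyR⟩ := inter_ball_nonempty_of_mem_competitors hR hK
  exact (absSuppFn_le hK.2.1 hy hu).trans
    ((neg_inner_le_norm y hu).trans (mem_ball_zero_iff.1 hyR).le)

lemma absSuppFn_le_neg_inner_add_infDist (hne : K.Nonempty) (hKC : K ⊆ C) {u : En n}
    (hu : u ∈ dualSphere n C) (y : En n) :
    absSuppFn K u ≤ -⟪y, u⟫ + Metric.infDist y K := by
  rw [← sub_le_iff_le_add', Metric.le_infDist hne]
  intro z hz
  calc absSuppFn K u - -⟪y, u⟫ ≤ -⟪z, u⟫ - -⟪y, u⟫ := by gcongr; exact absSuppFn_le hKC hz hu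
    _ = -⟪z - y, u⟫ := by rw [inner_sub_left]; ring
    _ ≤ dist y z := by rw [dist_comm, dist_eq_norm]; exact neg_inner_le_norm _ hu

lemma measure_compl_le_of_forall_notMem_eventually {α : Type*} [MeasurableSpace α] {μ : Measure α}
    {K : ℕ → Set α} {L : Set α} (hL : ∀ x ∉ L, ∀ᶠ j in atTop, x ∉ K j) {m : ℝ≥0∞}
    (hm : ∀ j, μ (K j)ᶜ ≤ m) : μ Lᶜ ≤ m := by
  have hsub : Lᶜ ⊆ ⋃ N : ℕ, ⋂ j ≥ N, (K j)ᶜ := fun x hx =>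
    (eventually_atTop.1 (hL x hx)).elim fun N hN => mem_iUnion.2 ⟨N, mem_iInter₂.2 hN⟩
  have hmono : Monotone fun N : ℕ => ⋂ j ≥ N, (K j)ᶜ := fun a b hab =>
    biInter_subset_biInter_left fun j hj => hab.trans hj
  calc μ Lᶜ ≤ μ (⋃ N : ℕ, ⋂ j ≥ N, (K j)ᶜ) := measure_mono hsub
    _ = ⨆ N : ℕ, μ (⋂ j ≥ N, (K j)ᶜ) := hmono.measure_iUnion
    _ ≤ m := iSup_le fun N => (measure_mono (iInter₂_subset N le_rfl)).trans (hm N)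

lemma logCost_absSuppFn_le_liminf {K : ℕ → Set (En n)} {L : Set (En n)} (hR : 0 < R)
    (hne : ∀ j, (K j).Nonempty) (hKC : ∀ j, K j ⊆ C) (hLne : L.Nonempty) (hLC : L ⊆ C)
    (hL : ∀ x ∈ L, Tendsto (fun j => Metric.infDist x (K j)) atTop (𝓝 0)) {u : En n}
    (hu : u ∈ dualSphere n C) :
    logCost R (absSuppFn L u) ≤ liminf (fun j => logCost R (absSuppFn (K j) u)) atTop := by
  refine le_of_forall_lt_imp_le_of_dense fun c hc => ?_
  have hc' : c ≠ ∞ := hc.ne_top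
  rw [lt_logCost_iff hR hc'] at hc
  have := hLne.to_subtype
  obtain ⟨⟨y, hy⟩, hyu⟩ := exists_lt_of_ciInf_lt hc
  rw [max_eq_right (neg_inner_nonneg (hLC hy) hu)] at hyu
  have hlim : Tendsto (fun j => -⟪y, u⟫ + Metric.infDist y (K j)) atTop (𝓝 (-⟪y, u⟫)) := by
    simpa only [add_zero] using (hL y hy).const_add (-⟪y, u⟫)
  refine le_liminf_of_le (by isBoundedDefault) ?_
  filter_upwards [hlim.eventually_lt_const hyu] with j hj
  exact ((lt_logCost_iff hR hc' _).2
    ((absSuppFn_le_neg_inner_add_infDist (hne j) (hKC j) hu y).trans_lt hj)).le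

/-- A minimising sequence subconverges in the sense of Kuratowski, and the energy is lower
semicontinuous by Fatou's lemma. -/
lemma exists_forall_logEnergy_le (hC : IsClosed C) (hR0 : 0 < R) (hR : m < μ (Metric.ball 0 R))
    (hφ : ∀ᵐ u ∂φ, u ∈ dualSphere n C) (hne : (competitors n C μ m).Nonempty) :
    ∃ K ∈ competitors n C μ m, ∀ K' ∈ competitors n C μ m, logEnergy φ R K ≤ logEnergy φ R K' := by
  obtain ⟨v, -, hv, hvm⟩ := exists_seq_tendsto_sInf (hne.image (logEnergy φ R))
    (OrderBot.bddBelow _)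
  choose K hKc hKv using hvm
  obtain ⟨σ, hσ, L, hLne, hL1, hL2⟩ := exists_strictMono_tendsto_infDist Metric.isBounded_ball
    fun j => inter_ball_nonempty_of_mem_competitors hR (hKc j)
  have hLC : L ⊆ C := fun x hx => (hC.mem_iff_infDist_zero ((hKc 0).1.mono (hKc 0).2.1)).2 <|
    le_antisymm (ge_of_tendsto' (hL2 x hx) fun j =>
      Metric.infDist_le_infDist_of_subset (hKc _).2.1 (hKc _).1) Metric.infDist_nonneg
  have hLm : μ Lᶜ ≤ m := measure_compl_le_of_forall_notMem_eventually hL1 fun j => (hKc (σ j)).2.2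
  refine ⟨L, ⟨hLne, hLC, hLm⟩, fun K' hK' => ?_⟩
  have hlim : Tendsto (fun j => logEnergy φ R (K (σ j))) atTop
      (𝓝 (sInf (logEnergy φ R '' competitors n C μ m))) :=
    (hv.comp hσ.tendsto_atTop).congr fun j => (hKv (σ j)).symm
  refine le_trans ?_ (sInf_le (mem_image_of_mem (logEnergy φ R) hK'))
  calc logEnergy φ R L
      ≤ ∫⁻ u, liminf (fun j => logCost R (absSuppFn (K (σ j)) u)) atTop ∂φ :=
        lintegral_mono_ae <| hφ.mono fun u hu => logCost_absSuppFn_le_liminf hR0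
          (fun j => (hKc _).1) (fun j => (hKc _).2.1) hLne hLC hL2 hu
    _ ≤ liminf (fun j => logEnergy φ R (K (σ j))) atTop :=
        lintegral_liminf_le fun j => measurable_logCost_absSuppFn hR0 (K (σ j))
    _ = sInf (logEnergy φ R '' competitors n C μ m) := hlim.liminf_eq

end Energy

section Cost

variable {α : Type*} [MeasurableSpace α] {φ : Measure α} {R : ℝ} {H : α → ℝ}

lemma ae_pos_of_lintegral_logCost_ne_top (hR : 0 < R) (hH : Measurable H)
    (hfin : ∫⁻ u, logCost R (H u) ∂φ ≠ ∞) : ∀ᵐ u ∂φ, 0 < H u := by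
  filter_upwards [ae_lt_top ((antitone_logCost hR).measurable.comp hH) hfin] with u hu
  by_contra h
  exact hu.ne (logCost_of_nonpos (not_lt.1 h))

lemma integrable_log_of_lintegral_logCost_ne_top [IsFiniteMeasure φ] (hR : 0 < R)
    (hH : Measurable H) (hHR : ∀ᵐ u ∂φ, H u ≤ R) (hfin : ∫⁻ u, logCost R (H u) ∂φ ≠ ∞) :
    Integrable (fun u => Real.log (H u)) φ := by
  have hpos := ae_pos_of_lintegral_logCost_ne_top hR hH hfin
  have hdiff : Integrable (fun u => Real.log R - Real.log (H u)) φ := by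
    refine ⟨(measurable_const.sub hH.log).aestronglyMeasurable, ?_⟩
    rw [hasFiniteIntegral_iff_ofReal]
    · refine lt_of_eq_of_lt (lintegral_congr_ae ?_) hfin.lt_top
      exact hpos.mono fun u hu => (logCost_of_pos hu).symm
    · filter_upwards [hpos, hHR] with u hu huR
      exact sub_nonneg.2 (Real.log_le_log hu huR)
  exact ((integrable_const (Real.log R)).sub hdiff).congr <|
    Eventually.of_forall fun u => sub_sub_cancel (Real.log R) (Real.log (H u))

lemma integral_log_le_mul_log [IsFiniteMeasure φ] (hpos : ∀ᵐ u ∂φ, 0 < H u)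
    (hHR : ∀ᵐ u ∂φ, H u ≤ R) (hint : Integrable (fun u => Real.log (H u)) φ) :
    ∫ u, Real.log (H u) ∂φ ≤ φ.real univ * Real.log R := by
  rw [← smul_eq_mul, ← integral_const]
  refine integral_mono_ae hint (integrable_const _) ?_
  filter_upwards [hpos, hHR] with u hu huR
  exact Real.log_le_log hu huR

lemma lintegral_logCost [IsFiniteMeasure φ] (hpos : ∀ᵐ u ∂φ, 0 < H u) (hHR : ∀ᵐ u ∂φ, H u ≤ R)
    (hint : Integrable (fun u => Real.log (H u)) φ) :
    ∫⁻ u, logCost R (H u) ∂φ =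
      ENNReal.ofReal (φ.real univ * Real.log R - ∫ u, Real.log (H u) ∂φ) := by
  have hnonneg : 0 ≤ᵐ[φ] fun u => Real.log R - Real.log (H u) := by
    filter_upwards [hpos, hHR] with u hu huR
    exact sub_nonneg.2 (Real.log_le_log hu huR)
  calc ∫⁻ u, logCost R (H u) ∂φ = ∫⁻ u, ENNReal.ofReal (Real.log R - Real.log (H u)) ∂φ :=
        lintegral_congr_ae (hpos.mono fun u hu => logCost_of_pos hu)
    _ = ENNReal.ofReal (∫ u, (Real.log R - Real.log (H u)) ∂φ) :=
        (ofReal_integral_eq_lintegral_ofReal ((integrable_const _).sub hint) hnonneg).symm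
    _ = ENNReal.ofReal (φ.real univ * Real.log R - ∫ u, Real.log (H u) ∂φ) := by
        rw [integral_sub (integrable_const _) hint, integral_const, smul_eq_mul]

end Cost

section LogMinimizer

variable {n : ℕ} {C K : Set (En n)} {a : ℝ} {μ φ : Measure (En n)} {R : ℝ} {H : En n → ℝ}

lemma pos_of_lt_measure_ball {m : ℝ≥0∞} (hR : m < μ (Metric.ball 0 R)) : 0 < R := by
  by_contra h
  simp [Metric.ball_eq_empty.2 (not_lt.1 h)] at hR

lemma IsAdmissible.wulff_nonempty (hH : IsAdmissible n C H) (hC : IsGoodCone n C) :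
    (wulff n C (dualSphere n C) H).Nonempty :=
  hC.interior_nonempty.elim fun _ hx => (hH.exists_smul_mem_wulff hC hx).elim fun _ hc => ⟨_, hc⟩

/-- For a nonzero finite measure `φ` concentrated on the unit sphere of the dual cone, `K` has
finite and least energy among the sets of covolume at most `φ univ`. The radius `R` is so large
that all of these sets meet the ball of radius `R`. -/
structure IsLogMinimizer (n : ℕ) (C : Set (En n)) (μ φ : Measure (En n)) (R : ℝ)
    (K : Set (En n)) : Prop where
  ae_mem_dualSphere : ∀ᵐ u ∂φ, u ∈ dualSphere n C
  measure_univ_lt : φ univ < μ (Metric.ball 0 R)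
  mem_competitors : K ∈ competitors n C μ (φ univ)
  logEnergy_ne_top : logEnergy φ R K ≠ ∞
  logEnergy_le : ∀ K' ∈ competitors n C μ (φ univ), logEnergy φ R K ≤ logEnergy φ R K'

lemma IsConeMeasure.wulff_rpow_mul_mem_competitors [NeZero n] (hμ : IsConeMeasure n C a μ)
    (hC : IsGoodCone n C) (hH : IsAdmissible n C H)
    (hfin : μ (wulff n C (dualSphere n C) H)ᶜ ≠ ∞) {m : ℝ≥0∞} (hm0 : m ≠ 0) (hm : m ≠ ∞) :
    (wulff n C (dualSphere n C) fun u =>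
      (m.toReal / μ.real (wulff n C (dualSphere n C) H)ᶜ) ^ a⁻¹ * H u) ∈ competitors n C μ m := by
  have hmpos : 0 < m.toReal := ENNReal.toReal_pos hm0 hm
  have hV : 0 < μ.real (wulff n C (dualSphere n C) H)ᶜ :=
    ENNReal.toReal_pos (hμ.measure_compl_wulff_pos hH).ne' hfin
  refine ⟨(hH.const_mul (Real.rpow_pos_of_pos (div_pos hmpos hV) _)).wulff_nonempty hC,
    inter_subset_left, ?_⟩
  rw [hμ.measure_compl_wulff_rpow_mul hC hH hfin hmpos, ENNReal.ofReal_toReal hm]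

lemma ae_le_absSuppFn_wulff_and_le (hR : φ univ < μ (Metric.ball 0 R))
    (hφ : ∀ᵐ u ∂φ, u ∈ dualSphere n C)
    (hH : wulff n C (dualSphere n C) H ∈ competitors n C μ (φ univ)) :
    ∀ᵐ u ∂φ, H u ≤ absSuppFn (wulff n C (dualSphere n C) H) u ∧ H u ≤ R := by
  filter_upwards [hφ] with u hu
  have hle : H u ≤ absSuppFn (wulff n C (dualSphere n C) H) u :=
    le_absSuppFn hH.1 fun _ hy => le_max_of_le_right ((mem_wulff_iff.1 hy).2 u hu)
  exact ⟨hle, hle.trans (absSuppFn_le_of_mem_competitors hR hH hu)⟩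

lemma logEnergy_wulff_le [IsFiniteMeasure φ] (hR : φ univ < μ (Metric.ball 0 R))
    (hφ : ∀ᵐ u ∂φ, u ∈ dualSphere n C)
    (hH : wulff n C (dualSphere n C) H ∈ competitors n C μ (φ univ)) (hpos : ∀ᵐ u ∂φ, 0 < H u)
    (hint : Integrable (fun u => Real.log (H u)) φ) :
    logEnergy φ R (wulff n C (dualSphere n C) H) ≤
      ENNReal.ofReal (φ.real univ * Real.log R - ∫ u, Real.log (H u) ∂φ) := by
  have hle := ae_le_absSuppFn_wulff_and_le hR hφ hH
  rw [← lintegral_logCost hpos (hle.mono fun u hu => hu.2) hint]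
  exact lintegral_mono_ae <| hle.mono fun _ hu =>
    antitone_logCost (pos_of_lt_measure_ball hR) hu.1

lemma isAdmissible_neg_inner {z : En n} (hz : z ∈ interior C) (hne : (dualSphere n C).Nonempty) :
    IsAdmissible n C fun u => -⟪z, u⟫ where
  nonneg _ hu := neg_inner_nonneg (interior_subset hz) hu
  bddAbove := ⟨‖z‖, fun _ hu => neg_inner_le_norm z hu⟩
  exists_pos := hne.imp fun _ hu => ⟨hu, neg_inner_pos hz hu⟩

lemma vadd_subset_wulff_neg_inner (hC : IsGoodCone n C) {z : En n} (hz : z ∈ C) :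
    z +ᵥ C ⊆ wulff n C (dualSphere n C) fun u => -⟪z, u⟫ := by
  rintro _ ⟨y, hy, rfl⟩
  refine mem_wulff_iff.2 ⟨hC.add_mem hz hy, fun u hu => ?_⟩
  simpa [inner_add_left] using neg_inner_nonneg hy hu

lemma IsConeMeasure.exists_logEnergy_ne_top [NeZero n] [IsFiniteMeasure φ] [NeZero φ]
    (hμ : IsConeMeasure n C a μ) (hC : IsGoodCone n C) {z : En n} (hz : z ∈ interior C)
    (hzfin : μ (z +ᵥ C)ᶜ ≠ ∞) (hφ : ∀ᵐ u ∂φ, u ∈ dualSphere n C)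
    (hR : φ univ < μ (Metric.ball 0 R)) :
    ∃ K ∈ competitors n C μ (φ univ), logEnergy φ R K ≠ ∞ := by
  have hH := isAdmissible_neg_inner hz hφ.exists
  have hfin := ne_top_of_le_ne_top hzfin (measure_mono (compl_subset_compl.2
    (vadd_subset_wulff_neg_inner hC (interior_subset hz))))
  have hφ0 : φ univ ≠ 0 := Measure.measure_univ_ne_zero.2 (NeZero.ne φ)
  have hV : 0 < μ.real (wulff n C (dualSphere n C) fun u => -⟪z, u⟫)ᶜ :=
    ENNReal.toReal_pos (hμ.measure_compl_wulff_pos hH).ne' hfin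
  have hmem := hμ.wulff_rpow_mul_mem_competitors hC hH hfin hφ0 (measure_ne_top φ univ)
  set s := ((φ univ).toReal / μ.real (wulff n C (dualSphere n C) fun u => -⟪z, u⟫)ᶜ) ^ a⁻¹
  have hs : 0 < s :=
    Real.rpow_pos_of_pos (div_pos (ENNReal.toReal_pos hφ0 (measure_ne_top φ univ)) hV) _
  obtain ⟨δ, hδ, hδle⟩ := exists_pos_forall_le_neg_inner hz
  have hmeas : Measurable fun u : En n => s * -⟪z, u⟫ := by fun_prop
  have hint : Integrable (fun u => Real.log (s * -⟪z, u⟫)) φ := by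
    refine Integrable.of_mem_Icc (Real.log (s * δ)) (Real.log (s * ‖z‖)) hmeas.log.aemeasurable ?_
    filter_upwards [hφ] with u hu
    have hδu := hδle u hu
    exact ⟨Real.log_le_log (by positivity) (by gcongr), Real.log_le_log
      (mul_pos hs (hδ.trans_le hδu)) (by gcongr; exact neg_inner_le_norm z hu)⟩
  exact ⟨_, hmem, ne_top_of_le_ne_top ENNReal.ofReal_ne_top (logEnergy_wulff_le hR hφ hmem
    (hφ.mono fun u hu => mul_pos hs (neg_inner_pos hz hu)) hint)⟩

lemma IsConeMeasure.exists_isLogMinimizer [NeZero n] [IsFiniteMeasure φ] [NeZero φ]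
    (hμ : IsConeMeasure n C a μ) (hC : IsGoodCone n C) {z : En n} (hz : z ∈ interior C)
    (hzfin : μ (z +ᵥ C)ᶜ ≠ ∞) (hφ : ∀ᵐ u ∂φ, u ∈ dualSphere n C) :
    ∃ R K, IsLogMinimizer n C μ φ R K := by
  obtain ⟨R, hR⟩ := hμ.exists_lt_measure_ball (measure_ne_top φ univ)
  obtain ⟨K₀, hK₀, hK₀fin⟩ := hμ.exists_logEnergy_ne_top hC hz hzfin hφ hR
  obtain ⟨K, hK, hmin⟩ :=
    exists_forall_logEnergy_le hC.isClosed (pos_of_lt_measure_ball hR) hR hφ ⟨K₀, hK₀⟩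
  exact ⟨R, K, hφ, hR, hK, ne_top_of_le_ne_top hK₀fin (hmin K₀ hK₀), hmin⟩

namespace IsLogMinimizer

lemma ae_pos (hK : IsLogMinimizer n C μ φ R K) : ∀ᵐ u ∂φ, 0 < absSuppFn K u :=
  ae_pos_of_lintegral_logCost_ne_top (pos_of_lt_measure_ball hK.measure_univ_lt)
    (upperSemicontinuous_absSuppFn K).measurable hK.logEnergy_ne_top

lemma ae_le (hK : IsLogMinimizer n C μ φ R K) : ∀ᵐ u ∂φ, absSuppFn K u ≤ R :=
  hK.ae_mem_dualSphere.mono fun _ =>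
    absSuppFn_le_of_mem_competitors hK.measure_univ_lt hK.mem_competitors

lemma integrable_log [IsFiniteMeasure φ] (hK : IsLogMinimizer n C μ φ R K) :
    Integrable (fun u => Real.log (absSuppFn K u)) φ :=
  integrable_log_of_lintegral_logCost_ne_top (pos_of_lt_measure_ball hK.measure_univ_lt)
    (upperSemicontinuous_absSuppFn K).measurable hK.ae_le hK.logEnergy_ne_top

lemma isAdmissible [NeZero φ] (hK : IsLogMinimizer n C μ φ R K) :
    IsAdmissible n C (absSuppFn K) where
  nonneg u _ := absSuppFn_nonneg K u
  bddAbove := ⟨R, fun _ => absSuppFn_le_of_mem_competitors hK.measure_univ_lt hK.mem_competitors⟩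
  exists_pos := (hK.ae_mem_dualSphere.and hK.ae_pos).exists

lemma measure_compl_wulff_le (hK : IsLogMinimizer n C μ φ R K) :
    μ (wulff n C (dualSphere n C) (absSuppFn K))ᶜ ≤ φ univ :=
  (measure_mono (compl_subset_compl.2 (subset_wulff_absSuppFn hK.mem_competitors.2.1))).trans
    hK.mem_competitors.2.2

lemma integral_log_le [IsFiniteMeasure φ] (hK : IsLogMinimizer n C μ φ R K)
    (hH : wulff n C (dualSphere n C) H ∈ competitors n C μ (φ univ)) (hpos : ∀ᵐ u ∂φ, 0 < H u)
    (hint : Integrable (fun u => Real.log (H u)) φ) :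
    ∫ u, Real.log (H u) ∂φ ≤ ∫ u, Real.log (absSuppFn K u) ∂φ := by
  have hHR := ae_le_absSuppFn_wulff_and_le hK.measure_univ_lt hK.ae_mem_dualSphere hH
  have hle : ENNReal.ofReal (φ.real univ * Real.log R - ∫ u, Real.log (absSuppFn K u) ∂φ) ≤
      ENNReal.ofReal (φ.real univ * Real.log R - ∫ u, Real.log (H u) ∂φ) := by
    rw [← lintegral_logCost hK.ae_pos hK.ae_le hK.integrable_log]
    exact (hK.logEnergy_le _ hH).trans
      (logEnergy_wulff_le hK.measure_univ_lt hK.ae_mem_dualSphere hH hpos hint)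
  have hnonneg := integral_log_le_mul_log hpos (hHR.mono fun u hu => hu.2) hint
  linarith [(ENNReal.ofReal_le_ofReal_iff (sub_nonneg.2 hnonneg)).1 hle]

end IsLogMinimizer

end LogMinimizer

section EulerLagrangeEquation

open scoped BoundedContinuousFunction

variable {n : ℕ} {C K : Set (En n)} {a t : ℝ} {μ φ : Measure (En n)} {R : ℝ} {H : En n → ℝ}

lemma integral_log_const_mul [IsFiniteMeasure φ] (hpos : ∀ᵐ u ∂φ, 0 < H u)
    (hint : Integrable (fun u => Real.log (H u)) φ) {s : ℝ} (hs : 0 < s) :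
    Integrable (fun u => Real.log (s * H u)) φ ∧
      ∫ u, Real.log (s * H u) ∂φ = φ.real univ * Real.log s + ∫ u, Real.log (H u) ∂φ := by
  have hlog : (fun u => Real.log s + Real.log (H u)) =ᵐ[φ] fun u => Real.log (s * H u) :=
    hpos.mono fun u hu => (Real.log_mul hs.ne' hu.ne').symm
  refine ⟨((integrable_const _).add hint).congr hlog, ?_⟩
  rw [← integral_congr_ae hlog, integral_add (integrable_const _) hint, integral_const,
    smul_eq_mul]

namespace IsLogMinimizer

variable [NeZero n] [IsFiniteMeasure φ] [NeZero φ]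

/-- The Wulff shape of `H` becomes a competitor after a dilation; the cost of the dilation is
estimated by `log x ≤ x - 1`. -/
lemma mul_integral_log_sub_le (hK : IsLogMinimizer n C μ φ R K) (hμ : IsConeMeasure n C a μ)
    (hC : IsGoodCone n C) (hH : IsAdmissible n C H)
    (hfin : μ (wulff n C (dualSphere n C) H)ᶜ ≠ ∞) (hpos : ∀ᵐ u ∂φ, 0 < H u)
    (hint : Integrable (fun u => Real.log (H u)) φ) :
    a * (∫ u, Real.log (H u) ∂φ - ∫ u, Real.log (absSuppFn K u) ∂φ) ≤
      μ.real (wulff n C (dualSphere n C) H)ᶜ - φ.real univ := by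
  have hmem := hμ.wulff_rpow_mul_mem_competitors hC hH hfin
    (Measure.measure_univ_ne_zero.2 (NeZero.ne φ)) (measure_ne_top φ univ)
  rw [← Measure.real] at hmem
  have hM : 0 < φ.real univ := measureReal_univ_pos
  set M := φ.real univ
  set V := μ.real (wulff n C (dualSphere n C) H)ᶜ
  have hV : 0 < V := ENNReal.toReal_pos (hμ.measure_compl_wulff_pos hH).ne' hfin
  have hs : 0 < (M / V) ^ a⁻¹ := Real.rpow_pos_of_pos (div_pos hM hV) _
  obtain ⟨hint', hlog⟩ := integral_log_const_mul hpos hint hs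
  have hle := hK.integral_log_le hmem (hpos.mono fun u hu => mul_pos hs hu) hint'
  rw [hlog, Real.log_rpow (div_pos hM hV)] at hle
  have ha := hμ.degree_pos
  calc a * (∫ u, Real.log (H u) ∂φ - ∫ u, Real.log (absSuppFn K u) ∂φ)
      ≤ a * -(M * (a⁻¹ * Real.log (M / V))) := by gcongr; linarith
    _ = M * Real.log (V / M) := by
        rw [← inv_div, Real.log_inv]
        field_simp
    _ ≤ M * (V / M - 1) := by gcongr; exact Real.log_le_sub_one_of_pos (div_pos hV hM)
    _ = V - M := by field_simp

lemma mul_integral_le (hK : IsLogMinimizer n C μ φ R K) (hμ : IsConeMeasure n C a μ)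
    (hC : IsGoodCone n C) (g : En n →ᵇ ℝ) (ht : 0 ≤ t) :
    a * (t * ∫ u, g u ∂φ) ≤
      μ.real (wulff n C (dualSphere n C) (logPerturb (absSuppFn K) g t))ᶜ -
        μ.real (wulff n C (dualSphere n C) (absSuppFn K))ᶜ := by
  have hfin := ne_top_of_le_ne_top (measure_ne_top φ univ) hK.measure_compl_wulff_le
  have hg : Integrable (fun u => t * g u) φ := (g.integrable φ).const_mul t
  have hlog : (fun u => t * g u + Real.log (absSuppFn K u)) =ᵐ[φ]
      fun u => Real.log (logPerturb (absSuppFn K) g t u) := hK.ae_pos.mono fun u hu => by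
    simp only [logPerturb, Real.log_mul (Real.exp_pos _).ne' hu.ne', Real.log_exp]
  have hle := hK.mul_integral_log_sub_le hμ hC (hK.isAdmissible.perturb g ht)
    (hμ.measure_compl_wulff_logPerturb_ne_top hC hK.isAdmissible hfin g ht)
    (hK.ae_pos.mono fun u hu => mul_pos (Real.exp_pos _) hu)
    ((hg.add hK.integrable_log).congr hlog)
  rw [← integral_congr_ae hlog, integral_add hg hK.integrable_log, integral_const_mul,
    add_sub_cancel_right] at hle
  have hcov : μ.real (wulff n C (dualSphere n C) (absSuppFn K))ᶜ ≤ φ.real univ :=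
    ENNReal.toReal_mono (measure_ne_top φ univ) hK.measure_compl_wulff_le
  linarith

lemma integral_le_integral_radialDensity (hK : IsLogMinimizer n C μ φ R K)
    (hμ : IsConeMeasure n C a μ) (hC : IsGoodCone n C) (g : En n →ᵇ ℝ) :
    ∫ u, g u ∂φ ≤ ∫ x in Metric.ball 0 1, g (wulffGauss n C (absSuppFn K) x) *
      radialDensity n C a (absSuppFn K) x ∂μ := by
  have hfin := ne_top_of_le_ne_top (measure_ne_top φ univ) hK.measure_compl_wulff_le
  have hderiv := hμ.hasDerivWithinAt_measureReal_compl_wulff hC hK.isAdmissible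
    (upperSemicontinuous_absSuppFn K) hfin g
  rw [hasDerivWithinAt_iff_tendsto_slope' self_notMem_Ioi] at hderiv
  refine le_of_mul_le_mul_left (ge_of_tendsto hderiv ?_) hμ.degree_pos
  filter_upwards [self_mem_nhdsWithin] with t (ht : 0 < t)
  rw [slope_def_field, sub_zero, logPerturb_zero, le_div_iff₀ ht, mul_assoc, mul_comm _ t]
  exact hK.mul_integral_le hμ hC g ht.le

/-- The Euler–Lagrange equation: the inequality between the first variations holds for `g` and for
`-g`. -/
lemma eq_map_wulffGauss (hK : IsLogMinimizer n C μ φ R K) (hμ : IsConeMeasure n C a μ)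
    (hC : IsGoodCone n C) :
    φ = ((μ.restrict (Metric.ball 0 1)).withDensity fun x =>
      ENNReal.ofReal (radialDensity n C a (absSuppFn K) x)).map
        (wulffGauss n C (absSuppFn K)) := by
  have hfin := ne_top_of_le_ne_top (measure_ne_top φ univ) hK.measure_compl_wulff_le
  rw [hμ.measure_compl_wulff hC hK.isAdmissible] at hfin
  have := isFiniteMeasure_withDensity hfin
  refine ext_of_forall_integral_eq_of_IsFiniteMeasure fun g => ?_
  rw [integral_map measurable_wulffGauss.aemeasurable g.continuous.aestronglyMeasurable,
    integral_withDensity_eq_integral_toReal_smul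
      (hK.isAdmissible.measurable_radialDensity hC).ennreal_ofReal
      (Eventually.of_forall fun _ => ENNReal.ofReal_lt_top)]
  simp only [ENNReal.toReal_ofReal (hK.isAdmissible.radialDensity_nonneg hC _), smul_eq_mul,
    mul_comm (radialDensity _ _ _ _ _)]
  refine le_antisymm (hK.integral_le_integral_radialDensity hμ hC g) ?_
  have hneg := hK.integral_le_integral_radialDensity hμ hC (-g)
  simp only [BoundedContinuousFunction.coe_neg, Pi.neg_apply, neg_mul, integral_neg] at hneg
  exact neg_le_neg_iff.1 hneg

end IsLogMinimizer

end EulerLagrangeEquation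

section ConeVolume

variable {n : ℕ} {C K ω : Set (En n)} {x y u : En n}

lemma nuInv_subset (hK : IsClosed K) : nuInv n K ω ⊆ K := fun _ hx => hK.frontier_subset hx.1

lemma IsGoodCone.biUnion_segment_subset (hC : IsGoodCone n C) {S : Set (En n)} (hS : S ⊆ C) :
    ⋃ x ∈ S, segment ℝ 0 x ⊆ C :=
  iUnion₂_subset fun _ hx => hC.convex.segment_subset hC.zero_mem (hS hx)

lemma coneVol_eq_coneMeasure (hC : IsGoodCone n C) (Θ : En n → ℝ) (hK : IsClosed K)
    (hKC : K ⊆ C) (ω : Set (En n)) :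
    coneVol n Θ K ω = coneMeasure n C Θ (⋃ x ∈ nuInv n K ω, segment ℝ 0 x) :=
  HTheta_eq_coneMeasure hC Θ (hC.biUnion_segment_subset ((nuInv_subset hK).trans hKC))

namespace IsAdmissible

lemma wulffRadial_smul_mul_neg_inner {H : En n → ℝ} (hH : IsAdmissible n C H)
    (hC : IsGoodCone n C) {r : ℝ} (hr : 0 < r) (x u : En n) :
    wulffRadial n C H (r • x) * -⟪r • x, u⟫ = wulffRadial n C H x * -⟪x, u⟫ := by
  rw [hH.wulffRadial_smul hC hr, real_inner_smul_left]
  field_simp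

lemma nonempty_of_absSuppFn (hK : IsAdmissible n C (absSuppFn K)) : K.Nonempty := by
  by_contra! hempty
  obtain ⟨u, -, hu⟩ := hK.exists_pos
  simp [absSuppFn, hempty] at hu

lemma mem_nuInv_wulff_iff (hK : IsAdmissible n C (absSuppFn K)) (hC : IsGoodCone n C)
    (hKC : K ⊆ C) (hx : x ∈ interior C) (hu : u ∈ dualSphere n C)
    (huniq : ∀ v ∈ dualSphere n C,
      absSuppFn K v = wulffRadial n C (absSuppFn K) x * -⟪x, v⟫ ↔ v = u) :
    x ∈ nuInv n (wulff n C (dualSphere n C) (absSuppFn K)) ω ↔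
      u ∈ ω ∧ wulffRadial n C (absSuppFn K) x = 1 := by
  have hnormal (hmem : x ∈ wulff n C (dualSphere n C) (absSuppFn K)) (v : En n) :=
    mem_normalsAt_wulff_absSuppFn (u := v) hC hK.nonempty_of_absSuppFn hKC hmem
  constructor
  · rintro ⟨hxf, v, hvω, hv⟩
    have hmem := (isClosed_wulff hC.isClosed).frontier_subset hxf
    obtain ⟨hvC, hvx⟩ := (hnormal hmem v).1 (hv ▸ rfl)
    have h1 : wulffRadial n C (absSuppFn K) x = 1 := by
      refine le_antisymm ((hK.mem_wulff_iff_wulffRadial_le_one hC hx).1 hmem) ?_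
      exact (le_mul_iff_one_le_left (neg_inner_pos hx hvC)).1
        (hvx ▸ hK.le_wulffRadial_mul hC hx hvC)
    exact ⟨(huniq v hvC).1 (by rw [hvx, h1, one_mul]) ▸ hvω, h1⟩
  · rintro ⟨huω, h1⟩
    refine ⟨hK.mem_frontier_wulff hC hx h1, u, huω, ?_⟩
    ext v
    rw [hnormal ((hK.mem_wulff_iff_wulffRadial_le_one hC hx).2 h1.le), mem_singleton_iff]
    simp only [h1, one_mul] at huniq
    exact ⟨fun hv => (huniq v hv.1).1 hv.2, fun hv => hv ▸ ⟨hu, (huniq u hu).2 rfl⟩⟩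

lemma mem_biUnion_segment_nuInv_wulff_iff [NeZero n] (hK : IsAdmissible n C (absSuppFn K))
    (hC : IsGoodCone n C) (hKC : K ⊆ C) (hy : y ∈ interior C) (hu : u ∈ dualSphere n C)
    (huniq : ∀ v ∈ dualSphere n C,
      absSuppFn K v = wulffRadial n C (absSuppFn K) y * -⟪y, v⟫ ↔ v = u) :
    y ∈ ⋃ x ∈ nuInv n (wulff n C (dualSphere n C) (absSuppFn K)) ω, segment ℝ 0 x ↔
      u ∈ ω ∧ 1 ≤ wulffRadial n C (absSuppFn K) y := by
  rw [mem_biUnion_segment_zero]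
  constructor
  · rintro ⟨x, hx, s, ⟨hs0, hs1⟩, rfl⟩
    have hs : 0 < s := hs0.lt_of_ne fun h => hC.zero_notMem_interior (by simpa [← h] using hy)
    simp only [hK.wulffRadial_smul_mul_neg_inner hC hs] at huniq
    obtain ⟨huω, h1⟩ :=
      (hK.mem_nuInv_wulff_iff hC hKC ((hC.smul_mem_interior_iff hs).1 hy) hu huniq).1 hx
    rw [hK.wulffRadial_smul hC hs, h1, mul_one]
    exact ⟨huω, (one_le_inv₀ hs).2 hs1⟩
  · rintro ⟨huω, h1⟩
    have hr := hK.wulffRadial_pos hC hy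
    refine ⟨wulffRadial n C (absSuppFn K) y • y, ?_, (wulffRadial n C (absSuppFn K) y)⁻¹,
      ⟨(inv_pos.2 hr).le, inv_le_one_of_one_le₀ h1⟩, inv_smul_smul₀ hr.ne' y⟩
    refine (hK.mem_nuInv_wulff_iff hC hKC (hC.smul_mem_interior hr hy) hu ?_).2 ⟨huω, ?_⟩
    · simpa only [hK.wulffRadial_smul_mul_neg_inner hC hr] using huniq
    · rw [hK.wulffRadial_smul hC hr, inv_mul_cancel₀ hr.ne']

end IsAdmissible

lemma IsConeMeasure.measure_biUnion_segment_nuInv_wulff [NeZero n] {a : ℝ} {μ : Measure (En n)}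
    (hμ : IsConeMeasure n C a μ) (hC : IsGoodCone n C) (hK : IsAdmissible n C (absSuppFn K))
    (hKC : K ⊆ C) (hω : MeasurableSet ω) :
    μ (⋃ x ∈ nuInv n (wulff n C (dualSphere n C) (absSuppFn K)) ω, segment ℝ 0 x) =
      (((μ.restrict (Metric.ball 0 1)).withDensity fun x =>
        ENNReal.ofReal (radialDensity n C a (absSuppFn K) x)).map
          (wulffGauss n C (absSuppFn K))) ω := by
  have hA := measurable_wulffGauss (n := n) (C := C) (H := absSuppFn K) hω
  have hfrontier : ∀ᵐ x ∂μ, x ∉ frontier (wulff n C (dualSphere n C) (absSuppFn K)) :=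
    measure_eq_zero_iff_ae_notMem.1
      (hμ.absolutelyContinuous ((convex_wulff hC.convex).addHaar_frontier volume))
  rw [Measure.map_apply measurable_wulffGauss hω, withDensity_apply _ hA,
    ← hμ.measure_inter_one_lt_wulffRadial hC hK hA fun r hr x => by
      rw [mem_preimage, hK.wulffGauss_smul hC hr, mem_preimage]]
  refine measure_congr ?_
  filter_upwards [hμ.ae_eq_wulffRadial_mul_iff hC hK (upperSemicontinuous_absSuppFn K), hfrontier]
    with y ⟨hy, hgauss, huniq⟩ hyf
  refine propext <| (hK.mem_biUnion_segment_nuInv_wulff_iff hC hKC hy hgauss huniq).trans <|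
    and_congr_right fun _ => ?_
  exact ⟨fun h => h.lt_of_ne fun h1 => hyf (hK.mem_frontier_wulff hC hy h1.symm), fun h => h.le⟩

end ConeVolume

section Existence

variable {n : ℕ} {C : Set (En n)} {q : ℝ} {Θ : En n → ℝ} {φ : Measure (En n)}

theorem exists_repsConeVol_of_neZero [NeZero n] [IsFiniteMeasure φ] [NeZero φ]
    (hC : IsGoodCone n C) (hΘ : IsThetaWeight n C q Θ) (hq1 : (n : ℝ) - 1 < q) (hq2 : q < n)
    (hφ : φ (omegaDual n C)ᶜ = 0) :
    ∃ K, IsCPseudoCone n C K ∧ RepsConeVol n C Θ K φ := by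
  have hμ := isConeMeasure_coneMeasure hC hΘ hq2
  have hφC : ∀ᵐ u ∂φ, u ∈ dualSphere n C :=
    measure_mono_null (compl_subset_compl.2 (omegaDual_subset_dualSphere C)) hφ
  obtain ⟨z, hz⟩ := hC.interior_nonempty
  obtain ⟨R, K, hK⟩ := hμ.exists_isLogMinimizer hC hz
    (coneMeasure_compl_vadd_lt_top hC hΘ hq1 hq2 hz).ne hφC
  have hH := hK.isAdmissible
  refine ⟨wulff n C (dualSphere n C) (absSuppFn K),
    hC.isCPseudoCone_wulff (hH.wulff_nonempty hC) hH.exists_pos, hφ, fun ω hω _ => ?_⟩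
  rw [coneVol_eq_coneMeasure hC Θ (isClosed_wulff hC.isClosed) inter_subset_left,
    hμ.measure_biUnion_segment_nuInv_wulff hC hH hK.mem_competitors.2.1 hω,
    ← hK.eq_map_wulffGauss hμ hC]

end Existence

section ZeroMeasure

variable {n : ℕ} {C ω : Set (En n)} {z : En n}

lemma IsGoodCone.isCPseudoCone_vadd (hC : IsGoodCone n C) (hz : z ∈ C) (hz0 : z ≠ 0) :
    IsCPseudoCone n C (z +ᵥ C) := by
  refine hC.isCPseudoCone_of_add_mem ⟨z, 0, hC.zero_mem, add_zero z⟩ (hC.isClosed.vadd z)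
    (hC.convex.vadd z) (fun h0 => hz0 ?_) ?_ fun x hx c hc => ?_
  · rw [mem_vadd_iff_sub_mem, zero_sub] at h0
    exact hC.inter_neg.subset ⟨hz, h0⟩
  · rintro _ ⟨y, hy, rfl⟩
    exact hC.add_mem hz hy
  · rw [mem_vadd_iff_sub_mem] at hx ⊢
    simpa [add_sub_right_comm] using hC.add_mem hx hc

lemma nuInv_vadd_subset_singleton (hC : IsGoodCone n C) (hω : ω ⊆ omegaDual n C) :
    nuInv n (z +ᵥ C) ω ⊆ {z} := by
  intro x hx
  obtain ⟨-, u, huω, hu⟩ := id hx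
  have hxC := mem_vadd_iff_sub_mem.1 (nuInv_subset (hC.isClosed.vadd z) hx)
  have hmax := (hu ▸ rfl : u ∈ normalsAt n (z +ᵥ C) x).2 z ⟨0, hC.zero_mem, add_zero z⟩
  by_contra hne
  have hlt := inner_neg_of_mem_interior (hω huω).2 (sub_ne_zero.2 hne) fun y hy => hy _ hxC
  rw [real_inner_comm, inner_sub_left] at hlt
  linarith

lemma coneVol_vadd_eq_zero (hn : 2 ≤ n) (hC : IsGoodCone n C) (Θ : En n → ℝ)
    (hω : ω ⊆ omegaDual n C) : coneVol n Θ (z +ᵥ C) ω = 0 := by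
  have hline : ⋃ x ∈ nuInv n (z +ᵥ C) ω, segment ℝ 0 x ⊆ Submodule.span ℝ {z} :=
    iUnion₂_subset fun x hx => by
      obtain rfl := nuInv_vadd_subset_singleton hC hω hx
      exact (Submodule.convex _).segment_subset (zero_mem _) (Submodule.mem_span_singleton_self x)
  refine measure_mono_null hline (withDensity_absolutelyContinuous _ _ ?_)
  refine Measure.addHaar_submodule _ _ fun htop => ?_
  have hrank := finrank_span_le_card (R := ℝ) ({z} : Set (En n))
  rw [htop, finrank_top, finrank_euclideanSpace_fin, toFinset_singleton,
    Finset.card_singleton] at hrank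
  omega

lemma exists_repsConeVol_zero (hn : 2 ≤ n) (hC : IsGoodCone n C) (Θ : En n → ℝ) :
    ∃ K, IsCPseudoCone n C K ∧ RepsConeVol n C Θ K 0 := by
  have : NeZero n := ⟨by omega⟩
  obtain ⟨z, hz⟩ := hC.interior_nonempty
  exact ⟨z +ᵥ C, hC.isCPseudoCone_vadd (interior_subset hz) (hC.ne_zero_of_mem_interior hz), rfl,
    fun ω _ hω => (coneVol_vadd_eq_zero hn hC Θ hω).symm⟩

end ZeroMeasure

section Finiteness

variable {n : ℕ} {C K : Set (En n)} {q : ℝ} {Θ : En n → ℝ} {φ : Measure (En n)} {z : En n}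

namespace IsCPseudoCone

lemma exists_mem_interior (hK : IsCPseudoCone n C K) (hC : IsGoodCone n C) :
    ∃ z ∈ K, z ∈ interior C := by
  obtain ⟨x, hx⟩ := hK.1.1
  obtain ⟨c, hc⟩ := hC.interior_nonempty
  exact ⟨x + c, hK.add_mem hx (interior_subset hc), hC.add_mem_interior (hK.subset hx) hc⟩

/-- A normal `u ∈ Ω_{C°}` at `x` has `⟪x, u⟫ < 0`, so `⟪s • x, u⟫ > ⟪x, u⟫` for `s < 1`: the
segment from `o` to `x` meets `K` only in `x`. -/
lemma biUnion_segment_nuInv_subset (hK : IsCPseudoCone n C K) (hz : z ∈ K) :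
    ⋃ x ∈ nuInv n K (omegaDual n C), segment ℝ 0 x ⊆ (z +ᵥ C)ᶜ ∪ frontier K := by
  intro y hy
  obtain ⟨x, hx, s, ⟨-, hs1⟩, rfl⟩ := mem_biUnion_segment_zero.1 hy
  rcases hs1.eq_or_lt with rfl | hs1
  · exact .inr (by simpa using hx.1)
  refine .inl fun hmem => ?_
  obtain ⟨-, u, hu, hxu⟩ := id hx
  have hxK := nuInv_subset hK.isClosed hx
  have hyK : s • x ∈ K := by
    simpa using hK.add_mem hz (mem_vadd_iff_sub_mem.1 hmem)
  have hneg := inner_neg_of_mem_interior hu.2 (ne_of_mem_of_not_mem hxK hK.1.2.2.2.1)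
    fun v hv => hv _ (hK.subset hxK)
  have hmax := (hxu ▸ rfl : u ∈ normalsAt n K x).2 _ hyK
  rw [real_inner_smul_left] at hmax
  rw [real_inner_comm] at hneg
  nlinarith

lemma coneVol_omegaDual_lt_top [NeZero n] (hK : IsCPseudoCone n C K) (hC : IsGoodCone n C)
    (hΘ : IsThetaWeight n C q Θ) (hq1 : (n : ℝ) - 1 < q) (hq2 : q < n) :
    coneVol n Θ K (omegaDual n C) < ∞ := by
  obtain ⟨z, hzK, hz⟩ := hK.exists_mem_interior hC
  have hfrontier : coneMeasure n C Θ (frontier K) = 0 :=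
    coneMeasure_absolutelyContinuous C Θ (hK.convex.addHaar_frontier volume)
  rw [coneVol_eq_coneMeasure hC Θ hK.isClosed hK.subset]
  calc coneMeasure n C Θ (⋃ x ∈ nuInv n K (omegaDual n C), segment ℝ 0 x)
      ≤ coneMeasure n C Θ (z +ᵥ C)ᶜ + coneMeasure n C Θ (frontier K) :=
        (measure_mono (hK.biUnion_segment_nuInv_subset hzK)).trans (measure_union_le _ _)
    _ < ∞ := by
        rw [hfrontier, add_zero]
        exact coneMeasure_compl_vadd_lt_top hC hΘ hq1 hq2 hz

end IsCPseudoCone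

lemma RepsConeVol.measure_univ (hφ : RepsConeVol n C Θ K φ) :
    φ univ = coneVol n Θ K (omegaDual n C) := by
  have hmeas : MeasurableSet (omegaDual n C) :=
    Metric.isClosed_sphere.measurableSet.inter isOpen_interior.measurableSet
  rw [← measure_add_measure_compl hmeas, hφ.1, add_zero, hφ.2 _ hmeas Subset.rfl]

end Finiteness

/-- A Borel measure on `Ω_{C°}` is the `Θ`-weighted cone-volume measure
of some `C`-pseudo-cone if and only if it is finite. -/
theorem statement1 (n : ℕ) (hn : 2 ≤ n) (C : Set (En n)) (hC : IsGoodCone n C)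
    (q : ℝ) (hq1 : (n : ℝ) - 1 < q) (hq2 : q < n)
    (Θ : En n → ℝ) (hΘ : IsThetaWeight n C q Θ)
    (φ : Measure (En n)) (hφ : φ (omegaDual n C)ᶜ = 0) :
    (∃ K : Set (En n), IsCPseudoCone n C K ∧ RepsConeVol n C Θ K φ) ↔ IsFiniteMeasure φ := by
  have : NeZero n := ⟨by omega⟩
  constructor
  · rintro ⟨K, hK, hKφ⟩
    exact ⟨hKφ.measure_univ.trans_lt (hK.coneVol_omegaDual_lt_top hC hΘ hq1 hq2)⟩
  · intro hfin
    rcases eq_zero_or_neZero φ with rfl | hφ0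
    · exact exists_repsConeVol_zero hn hC Θ
    · exact exists_repsConeVol_of_neZero hC hΘ hq1 hq2 hφ
end
end

section
/- For every C-pseudo-cone K, the Θ-weighted cone-volume measure V_K^Θ is a finite measure on Ω_{C°}. -/
open MeasureTheory Set Filter
open scoped RealInnerProductSpace ENNReal Topology Pointwise NNReal

noncomputable section

/-!
For a pseudo-cone `K` with recession cone `C` and any `x ∈ K` one has `x + C ⊆ K ⊆ C`, and the
segment from the origin to a boundary point of `K` stays in `C \ interior K`. So every cone volume
is at most the covolume `H_Θ(C \ K) ≤ H_Θ(C \ (x + C))`. Since `|C ∩ B_r|` is proportional to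
`r ^ n`, the intersection of `C \ (x + C)` with `B_r` has volume at most of order
`r ^ n - (r - ‖x‖) ^ n = O(r ^ (n - 1))`. As `Θ = O(‖·‖ ^ (-q))`, the condition `q < n` makes the
integral converge at the origin and `n - 1 < q` makes it converge at infinity.
-/

section PowerIntegral

lemma le_rpow_inv_of_le_rpow_of_neg {y t p : ℝ} (hy : 0 ≤ y) (ht : 0 < t) (hp : p < 0)
    (h : t ≤ y ^ p) : y ≤ t ^ p⁻¹ := by
  rcases hy.eq_or_lt with rfl | hy
  · positivity
  · exact (Real.le_rpow_inv_iff_of_neg hy ht hp).2 h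

variable {α : Type*} [MeasurableSpace α] {μ : Measure α} {f : α → ℝ} {A B : ℝ≥0∞} {a b q : ℝ}

lemma measure_le_rpow_neg_le (hf : ∀ x, 0 ≤ f x) (hq : 0 < q) {t : ℝ} (ht : 0 < t)
    (hA : μ {x | f x ≤ t ^ (-q)⁻¹} ≤ ENNReal.ofReal ((t ^ (-q)⁻¹) ^ a) * A) :
    μ {x | t ≤ f x ^ (-q)} ≤ ENNReal.ofReal (t ^ (-(a / q))) * A :=
  calc
    μ {x | t ≤ f x ^ (-q)} ≤ μ {x | f x ≤ t ^ (-q)⁻¹} :=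
      measure_mono fun x hx ↦ le_rpow_inv_of_le_rpow_of_neg (hf x) ht (neg_lt_zero.2 hq) hx
    _ ≤ ENNReal.ofReal ((t ^ (-q)⁻¹) ^ a) * A := hA
    _ = ENNReal.ofReal (t ^ (-(a / q))) * A := by
      rw [← Real.rpow_mul ht.le, inv_neg, neg_mul, inv_mul_eq_div]

lemma setLIntegral_lt_top_of_le_ofReal_mul {s : Set α} (hs : MeasurableSet s) {g : α → ℝ≥0∞}
    (hf : IntegrableOn f s μ) (hA : A ≠ ⊤) (hg : ∀ x ∈ s, g x ≤ ENNReal.ofReal (f x) * A) :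
    ∫⁻ x in s, g x ∂μ < ⊤ :=
  calc
    ∫⁻ x in s, g x ∂μ ≤ ∫⁻ x in s, ENNReal.ofReal (f x) * A ∂μ := setLIntegral_mono' hs hg
    _ = (∫⁻ x in s, ENNReal.ofReal (f x) ∂μ) * A := lintegral_mul_const' _ _ hA
    _ < ⊤ := ENNReal.mul_lt_top hf.lintegral_lt_top hA.lt_top

theorem lintegral_rpow_neg_lt_top_of_measure_le (hfm : Measurable f) (hf : ∀ x, 0 ≤ f x)
    (hq : 0 < q) (hqa : q < a) (hbq : b < q) (hA : A ≠ ⊤) (hB : B ≠ ⊤)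
    (hμA : ∀ r : ℝ, 0 < r → r ≤ 1 → μ {x | f x ≤ r} ≤ ENNReal.ofReal (r ^ a) * A)
    (hμB : ∀ r : ℝ, 1 ≤ r → μ {x | f x ≤ r} ≤ ENNReal.ofReal (r ^ b) * B) :
    ∫⁻ x, ENNReal.ofReal (f x ^ (-q)) ∂μ < ⊤ := by
  have hinv : (-q)⁻¹ ≤ 0 := inv_nonpos.2 (neg_nonpos.2 hq.le)
  have integrable_Ioc : IntegrableOn (fun t : ℝ ↦ t ^ (-(b / q))) (Ioc 0 1) := by
    rw [← intervalIntegrable_iff_integrableOn_Ioc_of_le zero_le_one]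
    exact intervalIntegral.intervalIntegrable_rpow' (neg_lt_neg ((div_lt_one hq).2 hbq))
  have integrable_Ioi : IntegrableOn (fun t : ℝ ↦ t ^ (-(a / q))) (Ioi 1) :=
    integrableOn_Ioi_rpow_of_lt (neg_lt_neg ((one_lt_div hq).2 hqa)) one_pos
  rw [lintegral_eq_lintegral_meas_le _ (Eventually.of_forall fun x ↦ Real.rpow_nonneg (hf x) _)
    (hfm.pow_const _).aemeasurable, ← Ioc_union_Ioi_eq_Ioi (zero_le_one (α := ℝ))]
  refine (lintegral_union_le _ _ _).trans_lt (ENNReal.add_lt_top.2 ⟨?_, ?_⟩)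
  · refine setLIntegral_lt_top_of_le_ofReal_mul measurableSet_Ioc integrable_Ioc hB fun t ht ↦ ?_
    exact measure_le_rpow_neg_le hf hq ht.1
      (hμB _ (Real.one_le_rpow_of_pos_of_le_one_of_nonpos ht.1 ht.2 hinv))
  · refine setLIntegral_lt_top_of_le_ofReal_mul measurableSet_Ioi integrable_Ioi hA fun t ht ↦ ?_
    have ht0 : 0 < t := one_pos.trans ht
    exact measure_le_rpow_neg_le hf hq ht0
      (hμA _ (Real.rpow_pos_of_pos ht0 _) (Real.rpow_le_one_of_one_le_of_nonpos ht.le hinv))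

end PowerIntegral

section ConeVolume

open Module (finrank)

lemma pow_sub_sub_pow_le {r s : ℝ} (hs : 0 ≤ s) (hsr : s ≤ r) (m : ℕ) :
    r ^ m - (r - s) ^ m ≤ m * s * r ^ (m - 1) := by
  have hmax : max |r| |r - s| = r := by
    rw [abs_of_nonneg (hs.trans hsr), abs_of_nonneg (sub_nonneg.2 hsr), max_eq_left (by linarith)]
  calc
    r ^ m - (r - s) ^ m ≤ |r ^ m - (r - s) ^ m| := le_abs_self _
    _ ≤ |r - (r - s)| * m * max |r| |r - s| ^ (m - 1) := abs_pow_sub_pow_le ..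
    _ = m * s * r ^ (m - 1) := by rw [hmax, sub_sub_cancel, abs_of_nonneg hs, mul_comm s]

lemma measure_inter_closedBall_ne_top {X : Type*} [PseudoMetricSpace X] [ProperSpace X]
    [MeasurableSpace X] (μ : Measure X) [IsFiniteMeasureOnCompacts μ] (s : Set X) (x : X) (r : ℝ) :
    μ (s ∩ Metric.closedBall x r) ≠ ⊤ :=
  measure_ne_top_of_subset inter_subset_right measure_closedBall_lt_top.ne

variable {E : Type*} [NormedAddCommGroup E] {C : Set E} {x : E} {r : ℝ}

lemma vadd_inter_closedBall_subset (hx : x +ᵥ C ⊆ C) :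
    x +ᵥ (C ∩ Metric.closedBall 0 (r - ‖x‖)) ⊆ C ∩ Metric.closedBall 0 r := by
  rintro _ ⟨y, ⟨hyC, hy⟩, rfl⟩
  rw [mem_closedBall_zero_iff] at hy
  refine ⟨hx (vadd_mem_vadd_set hyC), mem_closedBall_zero_iff.2 ?_⟩
  exact (norm_add_le x y).trans (by linarith)

variable [NormedSpace ℝ E]

lemma smul_inter_closedBall_zero_one (hC : ∀ r : ℝ, 0 < r → r • C = C) (hr : 0 < r) :
    r • (C ∩ Metric.closedBall 0 1) = C ∩ Metric.closedBall 0 r := by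
  rw [smul_set_inter₀ hr.ne', hC r hr, smul_unitClosedBall_of_nonneg hr.le]

variable [MeasurableSpace E] [BorelSpace E] [FiniteDimensional ℝ E] (μ : Measure E)
  [μ.IsAddHaarMeasure]

lemma measure_cone_inter_closedBall (hC : ∀ r : ℝ, 0 < r → r • C = C) (hr : 0 < r) :
    μ (C ∩ Metric.closedBall 0 r) =
      ENNReal.ofReal (r ^ finrank ℝ E) * μ (C ∩ Metric.closedBall 0 1) := by
  rw [← smul_inter_closedBall_zero_one hC hr, Measure.addHaar_smul_of_nonneg μ hr.le]

lemma measure_cone_sdiff_vadd_inter_closedBall_le_sub (hCm : MeasurableSet C)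
    (hC : ∀ r : ℝ, 0 < r → r • C = C) (hx : x +ᵥ C ⊆ C) (hr : ‖x‖ < r) :
    μ ((C \ (x +ᵥ C)) ∩ Metric.closedBall 0 r) ≤
      ENNReal.ofReal (r ^ finrank ℝ E - (r - ‖x‖) ^ finrank ℝ E) *
        μ (C ∩ Metric.closedBall 0 1) := by
  have hs : 0 < r - ‖x‖ := sub_pos.2 hr
  set S := x +ᵥ (C ∩ Metric.closedBall 0 (r - ‖x‖))
  have measure_S : μ S =
      ENNReal.ofReal ((r - ‖x‖) ^ finrank ℝ E) * μ (C ∩ Metric.closedBall 0 1) := by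
    rw [measure_vadd, measure_cone_inter_closedBall μ hC hs]
  have hS : MeasurableSet S := (hCm.inter measurableSet_closedBall).const_vadd x
  have hS_top : μ S ≠ ⊤ := by
    rw [measure_vadd]
    exact measure_inter_closedBall_ne_top μ _ _ _
  calc
    μ ((C \ (x +ᵥ C)) ∩ Metric.closedBall 0 r) ≤ μ ((C ∩ Metric.closedBall 0 r) \ S) :=
      measure_mono fun _ ⟨⟨hyC, hy⟩, hyr⟩ ↦
        ⟨⟨hyC, hyr⟩, fun hyS ↦ hy (vadd_set_mono inter_subset_left hyS)⟩
    _ = μ (C ∩ Metric.closedBall 0 r) - μ S :=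
      measure_sdiff (vadd_inter_closedBall_subset hx) hS.nullMeasurableSet hS_top
    _ = _ := by
      rw [measure_S, measure_cone_inter_closedBall μ hC ((norm_nonneg x).trans_lt hr),
        ← ENNReal.sub_mul fun _ _ ↦ measure_inter_closedBall_ne_top μ _ _ _,
        ENNReal.ofReal_sub _ (by positivity)]

theorem measure_cone_sdiff_vadd_inter_closedBall_le [Nontrivial E] (hCm : MeasurableSet C)
    (hC : ∀ r : ℝ, 0 < r → r • C = C) (hx : x +ᵥ C ⊆ C) (hr : 0 < r) :
    μ ((C \ (x +ᵥ C)) ∩ Metric.closedBall 0 r) ≤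
      ENNReal.ofReal (finrank ℝ E * ‖x‖ * r ^ (finrank ℝ E - 1)) *
        μ (C ∩ Metric.closedBall 0 1) := by
  rcases le_or_gt r ‖x‖ with hrx | hrx
  · have hdim : 1 ≤ finrank ℝ E := Module.finrank_pos
    calc
      μ ((C \ (x +ᵥ C)) ∩ Metric.closedBall 0 r) ≤ μ (C ∩ Metric.closedBall 0 r) :=
        measure_mono (inter_subset_inter_left _ sdiff_subset)
      _ = ENNReal.ofReal (1 * r * r ^ (finrank ℝ E - 1)) * μ (C ∩ Metric.closedBall 0 1) := by
        rw [measure_cone_inter_closedBall μ hC hr, one_mul, mul_pow_sub_one (by omega)]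
      _ ≤ _ := by
        gcongr
        exact_mod_cast hdim
  · refine (measure_cone_sdiff_vadd_inter_closedBall_le_sub μ hCm hC hx hrx).trans ?_
    gcongr
    exact pow_sub_sub_pow_le (norm_nonneg x) hrx.le _

theorem setLIntegral_cone_sdiff_vadd_rpow_neg_norm_lt_top [Nontrivial E] (hCm : MeasurableSet C)
    (hC : ∀ r : ℝ, 0 < r → r • C = C) (hx : x +ᵥ C ⊆ C) {q : ℝ} (hq₁ : (finrank ℝ E : ℝ) - 1 < q)
    (hq₂ : q < finrank ℝ E) :
    ∫⁻ y in C \ (x +ᵥ C), ENNReal.ofReal (‖y‖ ^ (-q)) ∂μ < ⊤ := by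
  have hdim : 1 ≤ finrank ℝ E := Module.finrank_pos
  have hdim' : (1 : ℝ) ≤ finrank ℝ E := by exact_mod_cast hdim
  have sublevel (r : ℝ) : μ.restrict (C \ (x +ᵥ C)) {y | ‖y‖ ≤ r} =
      μ ((C \ (x +ᵥ C)) ∩ Metric.closedBall 0 r) := by
    rw [Measure.restrict_apply (measurableSet_le measurable_norm measurable_const), inter_comm]
    congr 2
    ext y
    exact mem_closedBall_zero_iff.symm
  have hfin := measure_inter_closedBall_ne_top μ C 0 1
  refine lintegral_rpow_neg_lt_top_of_measure_le (a := finrank ℝ E) (b := (finrank ℝ E : ℝ) - 1)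
    (A := μ (C ∩ Metric.closedBall 0 1))
    (B := ENNReal.ofReal (finrank ℝ E * ‖x‖) * μ (C ∩ Metric.closedBall 0 1)) measurable_norm
    norm_nonneg (by linarith) hq₂ hq₁ hfin (ENNReal.mul_ne_top ENNReal.ofReal_ne_top hfin) ?_ ?_
  · intro r hr _
    rw [sublevel, Real.rpow_natCast, ← measure_cone_inter_closedBall μ hC hr]
    exact measure_mono (inter_subset_inter_left _ sdiff_subset)
  · intro r hr
    have hr0 : 0 < r := one_pos.trans_le hr
    have hpow : r ^ ((finrank ℝ E : ℝ) - 1) = r ^ (finrank ℝ E - 1) := by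
      rw [← Nat.cast_pred hdim, Real.rpow_natCast]
    rw [sublevel, hpow, ← mul_assoc, ← ENNReal.ofReal_mul (by positivity), mul_comm (r ^ _)]
    exact measure_cone_sdiff_vadd_inter_closedBall_le μ hCm hC hx hr0

end ConeVolume

section PseudoCone

variable {n : ℕ} {C K : Set (En n)} {x : En n}

lemma isClosed_recCone (hK : IsClosed K) : IsClosed (recCone n K) := by
  simp only [recCone, ofPred_forall]
  exact isClosed_iInter fun x ↦ isClosed_iInter fun _ ↦ isClosed_iInter fun t ↦
    isClosed_iInter fun _ ↦ hK.preimage (by fun_prop)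

lemma smul_mem_recCone {z : En n} (hz : z ∈ recCone n K) {r : ℝ} (hr : 0 ≤ r) :
    r • z ∈ recCone n K := fun x hx t ht ↦ by
  rw [smul_smul]
  exact hz x hx _ (mul_nonneg ht hr)

lemma smul_recCone {r : ℝ} (hr : 0 < r) : r • recCone n K = recCone n K := by
  ext z
  rw [mem_smul_set_iff_inv_smul_mem₀ hr.ne']
  refine ⟨fun hz ↦ ?_, fun hz ↦ smul_mem_recCone hz (inv_nonneg.2 hr.le)⟩
  simpa only [smul_inv_smul₀ hr.ne'] using smul_mem_recCone hz hr.le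

lemma vadd_recCone_subset (hx : x ∈ K) : x +ᵥ recCone n K ⊆ K := by
  rintro _ ⟨z, hz, rfl⟩
  simpa only [one_smul, vadd_eq_add] using hz x hx 1 zero_le_one

lemma IsPseudoCone.smul_mem (hK : IsPseudoCone n K) (hx : x ∈ K) {l : ℝ} (hl : 1 ≤ l) :
    l • x ∈ K :=
  hK.2.2.2.2 l hl (smul_mem_smul_set hx)

lemma IsPseudoCone.subset_recCone (hK : IsPseudoCone n K) : K ⊆ recCone n K := by
  intro x hx y hy t ht
  rcases ht.eq_or_lt with rfl | ht
  · simpa only [zero_smul, add_zero] using hy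
  -- `y + t • x` is the limit of the convex combinations of `y` and `(s * t) • x` as `s → ∞`.
  have hlim : Tendsto (fun s : ℝ ↦ (1 - s⁻¹) • y + t • x) atTop (𝓝 ((1 - 0 : ℝ) • y + t • x)) :=
    ((tendsto_const_nhds.sub tendsto_inv_atTop_zero).smul_const y).add_const _
  rw [sub_zero, one_smul] at hlim
  refine hK.2.1.mem_of_tendsto hlim ?_
  filter_upwards [eventually_ge_atTop (1 : ℝ), eventually_ge_atTop t⁻¹] with s hs hst
  have hs₀ : 0 < s := one_pos.trans_le hs
  have hmem : (s * t) • x ∈ K := hK.smul_mem hx ((inv_le_iff_one_le_mul₀ ht).1 hst)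
  have hcomb := hK.2.2.1 hy hmem (sub_nonneg.2 (inv_le_one_of_one_le₀ hs)) (inv_nonneg.2 hs₀.le)
    (sub_add_cancel _ _)
  rwa [smul_smul, inv_mul_cancel_left₀ hs₀.ne'] at hcomb

lemma IsPseudoCone.smul_mem_interior (hK : IsPseudoCone n K) (hx : x ∈ interior K) {l : ℝ}
    (hl : 1 ≤ l) : l • x ∈ interior K := by
  have hl₀ : l ≠ 0 := (one_pos.trans_le hl).ne'
  refine interior_mono (hK.2.2.2.2 l hl) ?_
  rw [interior_smul₀ hl₀]
  exact smul_mem_smul_set hx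

lemma IsPseudoCone.segment_subset (hK : IsPseudoCone n K) (hx : x ∈ frontier K) :
    segment ℝ 0 x ⊆ recCone n K \ interior K := by
  rw [segment_eq_image]
  rintro _ ⟨s, ⟨hs₀, hs₁⟩, rfl⟩
  simp only [smul_zero, zero_add]
  refine ⟨smul_mem_recCone (hK.subset_recCone (hK.2.1.frontier_subset hx)) hs₀, fun hsx ↦ hx.2 ?_⟩
  have hs : s ≠ 0 := by
    rintro rfl
    exact hK.2.2.2.1 (by simpa only [zero_smul] using interior_subset hsx)
  simpa only [inv_smul_smul₀ hs] using
    hK.smul_mem_interior hsx ((one_le_inv₀ (hs₀.lt_of_ne' hs)).2 hs₁)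

theorem IsPseudoCone.coneVol_le_covol (hK : IsPseudoCone n K) (Θ : En n → ℝ) (ω : Set (En n)) :
    coneVol n Θ K ω ≤ covol n Θ (recCone n K) K := by
  have hint : interior K =ᵐ[HTheta n Θ] K :=
    (withDensity_absolutelyContinuous _ _).ae_eq
      (interior_ae_eq_of_null_frontier (hK.2.2.1.addHaar_frontier volume))
  calc
    coneVol n Θ K ω ≤ HTheta n Θ (recCone n K \ interior K) :=
      measure_mono (iUnion₂_subset fun _ hx ↦ hK.segment_subset hx.1)
    _ = covol n Θ (recCone n K) K := measure_congr ((ae_eq_refl _).diff hint)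

lemma IsThetaWeight.exists_le_mul_rpow_norm {q : ℝ} {Θ : En n → ℝ} (hΘ : IsThetaWeight n C q Θ)
    (hCc : IsClosed C) (hC : ∀ r : ℝ, 0 < r → r • C = C) :
    ∃ M : ℝ, ∀ y ∈ C \ {0}, Θ y ≤ M * ‖y‖ ^ (-q) := by
  obtain ⟨hcont, -, hhom⟩ := hΘ
  have hsub : C ∩ Metric.sphere 0 1 ⊆ C \ {0} := fun y hy ↦
    ⟨hy.1, ne_zero_of_mem_unit_sphere ⟨y, hy.2⟩⟩
  have hcompact : IsCompact (C ∩ Metric.sphere 0 1) := (isCompact_sphere _ _).inter_left hCc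
  obtain ⟨M, hM⟩ := (hcompact.image_of_continuousOn (hcont.mono hsub)).bddAbove
  refine ⟨M, fun y ⟨hyC, hy⟩ ↦ ?_⟩
  have hy₀ : 0 < ‖y‖ := norm_pos_iff.2 hy
  have hunit : ‖y‖⁻¹ • y ∈ C ∩ Metric.sphere 0 1 := by
    refine ⟨hC _ (inv_pos.2 hy₀) ▸ smul_mem_smul_set hyC, ?_⟩
    rw [mem_sphere_zero_iff_norm, norm_smul, norm_inv, norm_norm, inv_mul_cancel₀ hy₀.ne']
  calc
    Θ y = ‖y‖ ^ (-q) * Θ (‖y‖⁻¹ • y) := by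
      rw [← hhom _ (hsub hunit) _ hy₀, smul_inv_smul₀ hy₀.ne']
    _ ≤ ‖y‖ ^ (-q) * M := by
      gcongr
      exact hM (mem_image_of_mem Θ hunit)
    _ = M * ‖y‖ ^ (-q) := mul_comm _ _

lemma covol_le_mul_setLIntegral_rpow_norm {q M : ℝ} {Θ : En n → ℝ} [Nontrivial (En n)]
    (hΘ : ∀ y ∈ C \ {0}, Θ y ≤ M * ‖y‖ ^ (-q)) (hC : MeasurableSet C) (hK : MeasurableSet K) :
    covol n Θ C K ≤ ENNReal.ofReal M * ∫⁻ y in C \ K, ENNReal.ofReal (‖y‖ ^ (-q)) := by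
  rw [covol, HTheta, withDensity_apply', ← lintegral_const_mul' _ _ ENNReal.ofReal_ne_top]
  refine lintegral_mono_ae ?_
  filter_upwards [Measure.ae_ne _ (0 : En n), ae_restrict_mem (hC.diff hK)] with y hy hyCK
  rw [← ENNReal.ofReal_mul' (by positivity)]
  exact ENNReal.ofReal_le_ofReal (hΘ y ⟨hyCK.1, hy⟩)

theorem IsPseudoCone.covol_lt_top (hK : IsPseudoCone n K) {q : ℝ} (hq₁ : (n : ℝ) - 1 < q)
    (hq₂ : q < n) {Θ : En n → ℝ} (hΘ : IsThetaWeight n (recCone n K) q Θ) :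
    covol n Θ (recCone n K) K < ⊤ := by
  obtain ⟨x, hx⟩ := hK.1
  have : Nontrivial (En n) := nontrivial_of_ne x 0 (ne_of_mem_of_not_mem hx hK.2.2.2.1)
  have hclosed := isClosed_recCone hK.2.1
  obtain ⟨M, hM⟩ := hΘ.exists_le_mul_rpow_norm hclosed fun _ ↦ smul_recCone
  have hxK : x +ᵥ recCone n K ⊆ K := vadd_recCone_subset hx
  calc
    covol n Θ (recCone n K) K
      ≤ ENNReal.ofReal M * ∫⁻ y in recCone n K \ K, ENNReal.ofReal (‖y‖ ^ (-q)) :=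
        covol_le_mul_setLIntegral_rpow_norm hM hclosed.measurableSet hK.2.1.measurableSet
    _ ≤ ENNReal.ofReal M *
          ∫⁻ y in recCone n K \ (x +ᵥ recCone n K), ENNReal.ofReal (‖y‖ ^ (-q)) := by
        gcongr
    _ < ⊤ := ENNReal.mul_lt_top ENNReal.ofReal_lt_top <|
        setLIntegral_cone_sdiff_vadd_rpow_neg_norm_lt_top volume hclosed.measurableSet
          (fun _ ↦ smul_recCone) (hxK.trans hK.subset_recCone)
          (by rwa [finrank_euclideanSpace_fin]) (by rwa [finrank_euclideanSpace_fin])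

end PseudoCone

theorem statement4_general {n : ℕ} {C K : Set (En n)} (hK : IsCPseudoCone n C K) {q : ℝ}
    (hq₁ : (n : ℝ) - 1 < q) (hq₂ : q < n) {Θ : En n → ℝ} (hΘ : IsThetaWeight n C q Θ)
    (ω : Set (En n)) :
    coneVol n Θ K ω < ⊤ := by
  obtain ⟨hK, rfl⟩ := hK
  exact (hK.coneVol_le_covol Θ ω).trans_lt (hK.covol_lt_top hq₁ hq₂ hΘ)

/-- For every `C`-pseudo-cone `K`, the `Θ`-weighted cone-volume measure
`V_K^Θ` is finite. -/
theorem statement4 (n : ℕ) (hn : 2 ≤ n) (C : Set (En n)) (hC : IsGoodCone n C)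
    (q : ℝ) (hq1 : (n : ℝ) - 1 < q) (hq2 : q < n)
    (Θ : En n → ℝ) (hΘ : IsThetaWeight n C q Θ)
    (K : Set (En n)) (hK : IsCPseudoCone n C K) :
    coneVol n Θ K (omegaDual n C) < ⊤ :=
  statement4_general hK hq1 hq2 hΘ _
end
end
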